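/- arXiv:2302.14194 — 2 statements merged into one kernel-verified Lean document; each statement's English description precedes it below -/
import Mathlib

section
/- Let p : Fin n → EuclideanSpace ℝ (Fin d) be an injective family such that every p i is an extreme point of P := convexHull ℝ (Set.range p), and let ι : Fin n → Fin n be an involution with p (ι i) = − p i for all i (so P is centrally symmetric). Let q : Fin n → EuclideanSpace ℝ (Fin e) satisfy q (ι i) = − q i for all i. If (1) ‖q i − q j‖ ≤ ‖p i − p j‖ for every edge (i,j) of P, and (2) ‖p i‖ ≤ ‖q i‖ for all i, then ‖q i − q j‖ = ‖p i − p j‖ for all i, j, and ‖q i‖ = ‖p i‖ for all i (i.e. q is congruent to the skeleton of P via an orthogonal transformation). -/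
/-- For `i ≠ j`, the pair `(i,j)` is an edge of the polytope `convexHull ℝ (Set.range p)`
if the closed segment between `p i` and `p j` is an extreme subset of it. -/
def IsEdge {n d : ℕ} (p : Fin n → EuclideanSpace ℝ (Fin d)) (i j : Fin n) : Prop :=
  i ≠ j ∧ IsExtreme ℝ (convexHull ℝ (Set.range p)) (segment ℝ (p i) (p j))

namespace CSV
open MeasureTheory MeasureTheory.Measure Set Filter Topology
open scoped ENNReal Pointwise

theorem slicing {E : Type*} [NormedAddCommGroup E] [NormedSpace ℝ E] [FiniteDimensional ℝ E]
    [MeasurableSpace E] [BorelSpace E] (μ : Measure E) [IsAddHaarMeasure μ]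
    (ℓ : E →L[ℝ] ℝ) (u : E) (hu : ℓ u = 1) :
    ∃ κ : ℝ, 0 < κ ∧ ∀ A : Set E, MeasurableSet A →
      μ A = ENNReal.ofReal κ * ∫⁻ s : ℝ, (addHaar : Measure ℓ.ker) {z | s • u + (z : E) ∈ A} := by
  let f₂ : ℝ →L[ℝ] E := ContinuousLinearMap.toSpanSingleton ℝ u
  have h : Function.RightInverse f₂ ℓ := by intro s; simp [f₂, hu]
  let e := (ContinuousLinearEquiv.equivOfRightInverse ℓ f₂ h).symm
  let ρ : Measure (ℝ × ℓ.ker) := (volume : Measure ℝ).prod addHaar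
  have hρ : IsAddHaarMeasure ρ := inferInstance
  have hm : IsAddHaarMeasure (ρ.map e) := ContinuousLinearEquiv.isAddHaarMeasure_map e ρ
  have hA := isAddLeftInvariant_eq_smul μ (ρ.map e)
  set k := addHaarScalarFactor μ (ρ.map e)
  have hk : 0 < k := addHaarScalarFactor_pos_of_isAddHaarMeasure _ _
  refine ⟨k, hk, fun A hAm => ?_⟩
  rw [hA]
  have he : Measurable e := e.continuous.measurable
  rw [Measure.smul_apply, Measure.map_apply he hAm, Measure.prod_apply (he hAm)]
  simp only [ENNReal.ofReal_coe_nnreal]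
  rfl

theorem slicing_meas {E : Type*} [NormedAddCommGroup E] [NormedSpace ℝ E] [FiniteDimensional ℝ E]
    [MeasurableSpace E] [BorelSpace E]
    (ℓ : E →L[ℝ] ℝ) (u : E)  (A : Set E) (hA : MeasurableSet A) :
    Measurable (fun s : ℝ => (addHaar : Measure ℓ.ker) {z | s • u + (z : E) ∈ A}) := by
  have : MeasurableSet ((fun x : ℝ × ℓ.ker => x.1 • u + (x.2 : E)) ⁻¹' A) := by
    apply Continuous.measurable _ hA
    fun_prop
  exact measurable_measure_prodMk_left this

/-- one-dimensional Brunn-Minkowski -/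
theorem bm1 (A B C : Set ℝ) (hA : MeasurableSet A) (hB : MeasurableSet B)
    (hA0 : A.Nonempty) (hB0 : B.Nonempty)
    (h : ∀ x ∈ A, ∀ y ∈ B, (x + y) / 2 ∈ C) :
    volume A + volume B ≤ 2 * volume C := by
  have key : ∀ A' B' : Set ℝ, IsCompact A' → IsCompact B' → A'.Nonempty → B'.Nonempty → A' ⊆ A →
      B' ⊆ B → volume A' + volume B' ≤ 2 * volume C := by
    intro A' B' hA' hB' hA0 hB0 hAA hBB
    obtain ⟨a, ha, ha'⟩ := hA'.exists_isGreatest hA0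
    obtain ⟨b, hb, hb'⟩ := hB'.exists_isLeast hB0
    have e1 : volume ((fun x => x + b) '' A') = volume A' := by simp
    have e2 : volume ((fun x => a + x) '' B') = volume B' := by simp
    have hd : AEDisjoint volume ((fun x => x + b) '' A') ((fun x => a + x) '' B') := by
      refine measure_mono_null (t := {a + b}) ?_ (by simp)
      rintro _ ⟨⟨x, hx, rfl⟩, ⟨y, hy, hxy⟩⟩
      have := ha' hx
      have := hb' hy
      simp only at hxy
      simp only [mem_singleton_iff]
      linarith
    rw [← e1, ← e2, ← measure_union₀ (hB'.image (by fun_prop)).measurableSet.nullMeasurableSet hd]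
    have : (2 : ℝ≥0∞) * volume C = volume ((2:ℝ) • C) := by
      rw [addHaar_smul]; simp
    rw [this]
    apply measure_mono
    rintro _ (⟨x, hx, rfl⟩ | ⟨x, hx, rfl⟩)
    · refine ⟨_, h x (hAA hx) b (hBB hb), ?_⟩
      simp; ring
    · refine ⟨_, h a (hAA ha) x (hBB hx), ?_⟩
      simp; ring
  obtain ⟨a, ha⟩ := hA0
  obtain ⟨b, hb⟩ := hB0
  have aux : ∀ (B : Set ℝ) (b : ℝ) (x y : ℝ≥0∞), MeasurableSet B → b ∈ B →
      (∀ K, IsCompact K → K.Nonempty → K ⊆ B → x + volume K ≤ y) → x + volume B ≤ y := by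
    intro B b x y hB hb hK
    by_cases hx : x = ∞
    · have := hK {b} isCompact_singleton (by simp) (by simpa)
      simp [hx] at this ⊢
      exact this
    have h1 : volume B ≤ y - x := by
      refine le_of_forall_lt fun r hr => ?_
      obtain ⟨B', hB', hB'', hr'⟩ := hB.exists_lt_isCompact hr
      have := hK (insert b B') (hB''.insert b) ⟨b, by simp⟩ (insert_subset hb hB')
      exact (hr'.trans_le (measure_mono (subset_insert _ _))).trans_le
        (ENNReal.le_sub_of_add_le_left hx this)
    have h2 : x ≤ y := le_trans (by simp) (hK {b} isCompact_singleton (by simp) (by simpa))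
    calc x + volume B ≤ x + (y - x) := by gcongr
      _ = y := add_tsub_cancel_of_le h2
  refine aux B b _ _ hB hb fun B' h1 h2 h3 => ?_
  rw [add_comm]
  refine aux A a _ _ hA ha fun A' h4 h5 h6 => ?_
  rw [add_comm]
  exact key A' B' h4 h1 h5 h2 h6 h3

/-- one-dimensional Prekopa-Leindler, normalised -/
theorem pl1_norm (F G H : ℝ → ℝ) (hF : Measurable F) (hG : Measurable G) (hH : Measurable H)
    (hF0 : ∀ x, 0 ≤ F x) (hG0 : ∀ x, 0 ≤ G x) (hH0 : ∀ x, 0 ≤ H x)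
    (hF1 : IsLUB (range F) 1) (hG1 : IsLUB (range G) 1)
    (h : ∀ x y, F x * G y ≤ H ((x + y) / 2) ^ 2) :
    (∫⁻ x, ENNReal.ofReal (F x)) + (∫⁻ x, ENNReal.ofReal (G x))
      ≤ 2 * ∫⁻ x, ENNReal.ofReal (H x) := by
  rw [lintegral_eq_lintegral_meas_lt _ (Eventually.of_forall hF0) hF.aemeasurable,
    lintegral_eq_lintegral_meas_lt _ (Eventually.of_forall hG0) hG.aemeasurable,
    lintegral_eq_lintegral_meas_lt _ (Eventually.of_forall hH0) hH.aemeasurable]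
  have hmono : ∀ F : ℝ → ℝ, Measurable (fun t => volume {a : ℝ | t < F a}) := by
    intro F
    apply Antitone.measurable
    intro s t hst
    exact measure_mono fun x (hx : t < F x) => lt_of_le_of_lt hst hx
  rw [← lintegral_add_left (hmono F), ← lintegral_const_mul _ (hmono H)]
  refine setLIntegral_mono (by have := hmono H; fun_prop) fun t (ht : 0 < t) => ?_
  by_cases ht1 : t < 1
  · apply bm1
    · exact measurableSet_lt measurable_const hF
    · exact measurableSet_lt measurable_const hG
    · obtain ⟨_, ⟨x, rfl⟩, hx⟩ := (lt_isLUB_iff hF1).1 ht1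
      exact ⟨x, hx⟩
    · obtain ⟨_, ⟨x, rfl⟩, hx⟩ := (lt_isLUB_iff hG1).1 ht1
      exact ⟨x, hx⟩
    · intro x hx y hy
      simp only [mem_ofPred_eq] at *
      have := h x y
      have h2 : t ^ 2 < H ((x + y) / 2) ^ 2 := by nlinarith
      exact lt_of_pow_lt_pow_left₀ 2 (hH0 _) h2
  · have e1 : {a | t < F a} = ∅ := by
      ext x; simp only [mem_ofPred_eq, mem_empty_iff_false, iff_false, not_lt]
      exact (hF1.1 ⟨x, rfl⟩).trans (not_lt.1 ht1)
    have e2 : {a | t < G a} = ∅ := by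
      ext x; simp only [mem_ofPred_eq, mem_empty_iff_false, iff_false, not_lt]
      exact (hG1.1 ⟨x, rfl⟩).trans (not_lt.1 ht1)
    simp [e1, e2]

theorem pl1 (F G H : ℝ → ℝ) (hF : Measurable F) (hG : Measurable G) (hH : Measurable H)
    (hF0 : ∀ x, 0 ≤ F x) (hG0 : ∀ x, 0 ≤ G x) (hH0 : ∀ x, 0 ≤ H x)
    (hF1 : BddAbove (range F)) (hG1 : BddAbove (range G))
    (h : ∀ x y, F x * G y ≤ H ((x + y) / 2) ^ 2) :
    (∫⁻ x, ENNReal.ofReal (F x)) * (∫⁻ x, ENNReal.ofReal (G x))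
      ≤ (∫⁻ x, ENNReal.ofReal (H x)) ^ 2 := by
  set a := sSup (range F) with ha
  set b := sSup (range G) with hb
  have haL : IsLUB (range F) a := isLUB_csSup (range_nonempty _) hF1
  have hbL : IsLUB (range G) b := isLUB_csSup (range_nonempty _) hG1
  by_cases ha0 : a ≤ 0
  · have : ∀ x, F x = 0 := fun x => le_antisymm ((haL.1 ⟨x, rfl⟩).trans ha0) (hF0 x)
    simp [this]
  by_cases hb0 : b ≤ 0
  · have : ∀ x, G x = 0 := fun x => le_antisymm ((hbL.1 ⟨x, rfl⟩).trans hb0) (hG0 x)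
    simp [this]
  push Not at ha0 hb0
  have sc : ∀ (F : ℝ → ℝ) (a : ℝ), 0 < a → IsLUB (range F) a → IsLUB (range (fun x => F x / a)) 1 := by
    intro F a ha hL
    constructor
    · rintro _ ⟨x, rfl⟩
      exact (div_le_one ha).2 (hL.1 ⟨x, rfl⟩)
    · intro c hc
      have : a ≤ c * a := hL.2 (by
        rintro _ ⟨x, rfl⟩
        have := hc ⟨x, rfl⟩
        exact (div_le_iff₀ ha).1 this)
      nlinarith
  have hab : 0 < a * b := mul_pos ha0 hb0
  have hs : 0 < √(a * b) := Real.sqrt_pos.2 hab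
  have := pl1_norm (fun x => F x / a) (fun x => G x / b) (fun x => H x / √(a*b))
    (hF.div_const _) (hG.div_const _) (hH.div_const _) (fun x => div_nonneg (hF0 x) ha0.le)
    (fun x => div_nonneg (hG0 x) hb0.le) (fun x => div_nonneg (hH0 x) hs.le) (sc F a ha0 haL)
    (sc G b hb0 hbL) (by
      intro x y
      rw [div_pow, Real.sq_sqrt hab.le, div_mul_div_comm]
      gcongr
      exact h x y)
  have ei : ∀ (F : ℝ → ℝ) (hF : Measurable F) (a : ℝ), 0 < a →
      ∫⁻ x, ENNReal.ofReal (F x / a) = ENNReal.ofReal a⁻¹ * ∫⁻ x, ENNReal.ofReal (F x) := by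
    intro F hF a ha
    rw [← lintegral_const_mul _ (by fun_prop)]
    congr 1; ext x
    rw [← ENNReal.ofReal_mul (by positivity)]
    congr 1; field_simp
  rw [ei F hF a ha0, ei G hG b hb0, ei H hH _ hs] at this
  generalize (∫⁻ x, ENNReal.ofReal (F x)) = f at *
  generalize (∫⁻ x, ENNReal.ofReal (G x)) = g at *
  generalize (∫⁻ x, ENNReal.ofReal (H x)) = k at *
  by_cases hk : k = ∞
  · simp [hk]
  have hf : f ≠ ∞ := by
    intro hf
    rw [hf, ENNReal.mul_top (by simpa using ha0), _root_.top_add, top_le_iff] at this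
    exact ENNReal.mul_ne_top (by simp) (ENNReal.mul_ne_top (by simp) hk) this
  have hg : g ≠ ∞ := by
    intro hf
    rw [hf, ENNReal.mul_top (by simpa using hb0), _root_.add_top, top_le_iff] at this
    exact ENNReal.mul_ne_top (by simp) (ENNReal.mul_ne_top (by simp) hk) this
  lift f to NNReal using hf
  lift g to NNReal using hg
  lift k to NNReal using hk
  have h3 : a⁻¹ * f + b⁻¹ * g ≤ 2 * ((√(a*b))⁻¹ * k) := by
    have h2 := ENNReal.toReal_mono (by finiteness) this
    rw [ENNReal.toReal_add (by finiteness) (by finiteness)] at h2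
    simpa [ENNReal.toReal_mul, ENNReal.toReal_ofReal, ha0.le, hb0.le] using h2
  norm_cast
  rw [← NNReal.coe_le_coe]
  push_cast
  have hab2 : √(a*b)^2 = a * b := Real.sq_sqrt hab.le
  have h4 : (a⁻¹ * f + b⁻¹ * g)^2 ≤ (2 * ((√(a*b))⁻¹ * k))^2 := by gcongr
  have h5 : (2 * ((√(a*b))⁻¹ * (k:ℝ)))^2 = 4 * k^2 * (a⁻¹ * b⁻¹) := by
    rw [mul_pow, mul_pow, inv_pow, hab2, mul_inv]; ring
  have h6 : 4 * (f * g) * (a⁻¹ * b⁻¹) ≤ 4 * (k:ℝ)^2 * (a⁻¹ * b⁻¹) := by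
    rw [← h5]; nlinarith [sq_nonneg (a⁻¹ * f - b⁻¹ * g)]
  have h7 := le_of_mul_le_mul_right h6 (by positivity)
  linarith


theorem bm {d : ℕ} : ∀ {E : Type*} [NormedAddCommGroup E] [NormedSpace ℝ E] [FiniteDimensional ℝ E]
    [MeasurableSpace E] [BorelSpace E] (μ : Measure E) [IsAddHaarMeasure μ]
    (_ : Module.finrank ℝ E = d) (A B C : Set E) (_ : IsCompact A) (_ : IsCompact B)
    (_ : IsCompact C) (_ : ∀ x ∈ A, ∀ y ∈ B, (2⁻¹ : ℝ) • (x + y) ∈ C), μ A * μ B ≤ μ C ^ 2 := by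
  induction d with
  | zero =>
    intro E _ _ _ _ _ μ _ hd A B C hA hB hC h
    have := Module.finrank_zero_iff.1 hd
    rcases A.eq_empty_or_nonempty with rfl | ⟨a, ha⟩
    · simp
    rcases B.eq_empty_or_nonempty with rfl | ⟨b, hb⟩
    · simp
    have : C = univ := by
      ext x; simp only [mem_univ, iff_true]
      rw [Subsingleton.elim x ((2⁻¹ : ℝ) • (a + b))]
      exact h a ha b hb
    rw [this, sq]
    gcongr <;> simp
  | succ d ih =>
    intro E _ _ _ _ _ μ _ hd A B C hA hB hC h
    have : Nontrivial E := Module.nontrivial_of_finrank_pos (R := ℝ) (by omega)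
    obtain ⟨x, hx⟩ := exists_ne (0 : E)
    obtain ⟨ℓ, hℓ⟩ : ∃ ℓ : E →L[ℝ] ℝ, ℓ x = 1 := by
      obtain ⟨ℓ, hℓ⟩ := SeparatingDual.exists_eq_one (R := ℝ) hx
      exact ⟨ℓ, hℓ⟩
    obtain ⟨κ, hκ, hs⟩ := slicing μ ℓ x hℓ
    have hdk : Module.finrank ℝ ℓ.ker = d := by
      have h1 := LinearMap.finrank_range_add_finrank_ker (ℓ : E →ₗ[ℝ] ℝ)
      have h2 : (ℓ : E →ₗ[ℝ] ℝ).range = ⊤ := by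
        rw [LinearMap.range_eq_top]
        intro s
        exact ⟨s • x, by simp [hℓ]⟩
      rw [h2, finrank_top, Module.finrank_self, hd] at h1
      change Module.finrank ℝ (ℓ : E →ₗ[ℝ] ℝ).ker = d
      omega
    let ν : Measure ℓ.ker := addHaar
    let S : Set E → ℝ → Set ℓ.ker := fun A s => {z | s • x + (z : E) ∈ A}
    have hSc : ∀ A, IsCompact A → ∀ s, IsCompact (S A s) := by
      intro A hA s
      have : IsClosedEmbedding (fun z : ℓ.ker => s • x + (z : E)) := by
        have h1 : IsClosedEmbedding (fun z : ℓ.ker => (z : E)) :=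
          (Submodule.closed_of_finiteDimensional (ℓ : E →ₗ[ℝ] ℝ).ker).isClosedEmbedding_subtypeVal
        exact (Homeomorph.addLeft (s • x)).isClosedEmbedding.comp h1
      exact this.isCompact_preimage hA
    have hbd : ∀ A, IsCompact A → ∃ M : ℝ, ∀ s, (ν (S A s)) ≤ ENNReal.ofReal M := by
      intro A hA
      let T : E → ℓ.ker := fun y => ⟨y - ℓ y • x, by simp [hℓ]⟩
      have hT : Continuous T := by fun_prop
      have : ν (T '' A) < ∞ := (hA.image hT).measure_lt_top
      refine ⟨(ν (T '' A)).toReal, fun s => ?_⟩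
      rw [ENNReal.ofReal_toReal this.ne]
      apply measure_mono
      intro z hz
      refine ⟨_, hz, ?_⟩
      ext
      have : ℓ z = 0 := z.2
      simp [T, hℓ, this]
    have hform : ∀ A, IsCompact A → μ A = ENNReal.ofReal κ * ∫⁻ s, ENNReal.ofReal (ν.real (S A s)) := by
      intro A hA
      rw [hs A hA.measurableSet]
      congr 2; ext s
      rw [Measure.real, ENNReal.ofReal_toReal (hSc A hA s).measure_lt_top.ne]
    have hmeas : ∀ A, IsCompact A → Measurable (fun s => ν.real (S A s)) := by
      intro A hA
      exact (slicing_meas ℓ x A hA.measurableSet).ennreal_toReal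
    have hb' : ∀ A, IsCompact A → BddAbove (range (fun s => ν.real (S A s))) := by
      intro A hA
      obtain ⟨M, hM⟩ := hbd A hA
      refine ⟨(ENNReal.ofReal M).toReal, ?_⟩
      rintro _ ⟨s, rfl⟩
      exact ENNReal.toReal_mono (by simp) (hM s)
    have := pl1 (fun s => ν.real (S A s)) (fun s => ν.real (S B s)) (fun s => ν.real (S C s))
      (hmeas A hA) (hmeas B hB) (hmeas C hC) (fun _ => measureReal_nonneg) (fun _ => measureReal_nonneg)
      (fun _ => measureReal_nonneg) (hb' A hA) (hb' B hB) (by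
        intro s t
        have := ih ν hdk (S A s) (S B t) (S C ((s + t) / 2)) (hSc A hA _) (hSc B hB _) (hSc C hC _) (by
          intro z hz w hw
          have := h _ hz _ hw
          simp only [S, mem_ofPred_eq]
          convert this using 1
          push_cast
          module)
        have h3 := ENNReal.toReal_mono (by
          exact ENNReal.pow_ne_top (hSc C hC _).measure_lt_top.ne) this
        simpa [Measure.real] using h3)
    rw [hform A hA, hform B hB, hform C hC, mul_pow]
    calc _ = ENNReal.ofReal κ ^ 2 * ((∫⁻ s, ENNReal.ofReal (ν.real (S A s))) *
        ∫⁻ s, ENNReal.ofReal (ν.real (S B s))) := by ring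
      _ ≤ _ := by gcongr

end CSV

namespace CSV
open MeasureTheory MeasureTheory.Measure Set Filter Topology
open scoped ENNReal Pointwise
set_option linter.unusedSectionVars false

def Kset {I : Type*} {E : Type*} [NormedAddCommGroup E] [NormedSpace ℝ E]
    (n : I → E →L[ℝ] ℝ) (c : I → ℝ) : Set E := {x | ∀ i, n i x ≤ c i}

def Bdd {I : Type*} {E : Type*} [NormedAddCommGroup E] [NormedSpace ℝ E]
    (n : I → E →L[ℝ] ℝ) : Prop := ∀ x, (∀ i, n i x ≤ 0) → x = 0

noncomputable def vol {I : Type*} {E : Type*} [NormedAddCommGroup E] [NormedSpace ℝ E]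
    [MeasurableSpace E] (μ : Measure E) (n : I → E →L[ℝ] ℝ) (c : I → ℝ) : ℝ := μ.real (Kset n c)

theorem exists_sliceU {E : Type*} [NormedAddCommGroup E] [NormedSpace ℝ E] (ℓ : E →L[ℝ] ℝ) :
    ∃ u : E, ℓ ≠ 0 → ℓ u = 1 := by
  by_cases h : ℓ = 0
  · exact ⟨0, fun h' => absurd h h'⟩
  · obtain ⟨x, hx⟩ := DFunLike.ne_iff.1 h
    have hx' : ℓ x ≠ 0 := hx
    exact ⟨(ℓ x)⁻¹ • x, fun _ => by simp [hx']⟩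

noncomputable def sliceU {E : Type*} [NormedAddCommGroup E] [NormedSpace ℝ E] (ℓ : E →L[ℝ] ℝ) : E :=
  (exists_sliceU ℓ).choose

theorem sliceU_spec {E : Type*} [NormedAddCommGroup E] [NormedSpace ℝ E] {ℓ : E →L[ℝ] ℝ}
    (h : ℓ ≠ 0) : ℓ (sliceU ℓ) = 1 := (exists_sliceU ℓ).choose_spec h

theorem exists_sliceK {E : Type*} [NormedAddCommGroup E] [NormedSpace ℝ E] [FiniteDimensional ℝ E]
    [MeasurableSpace E] [BorelSpace E] (μ : Measure E) [IsAddHaarMeasure μ]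
    (ℓ : E →L[ℝ] ℝ) : ∃ κ : ℝ, 0 < κ ∧ (ℓ ≠ 0 → ∀ A : Set E, MeasurableSet A →
      μ A = ENNReal.ofReal κ *
        ∫⁻ s : ℝ, (addHaar : Measure ℓ.ker) {z | s • sliceU ℓ + (z : E) ∈ A}) := by
  by_cases h : ℓ = 0
  · exact ⟨1, one_pos, fun h' => absurd h h'⟩
  · obtain ⟨k, hk, hA⟩ := slicing μ ℓ (sliceU ℓ) (sliceU_spec h)
    exact ⟨k, hk, fun _ => hA⟩

noncomputable def sliceK {E : Type*} [NormedAddCommGroup E] [NormedSpace ℝ E] [FiniteDimensional ℝ E]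
    [MeasurableSpace E] [BorelSpace E] (μ : Measure E) [IsAddHaarMeasure μ]
    (ℓ : E →L[ℝ] ℝ) : ℝ := (exists_sliceK μ ℓ).choose

/-- restricted normals -/
noncomputable def resN {I : Type*} {E : Type*} [NormedAddCommGroup E] [NormedSpace ℝ E]
    (n : I → E →L[ℝ] ℝ) (ℓ : E →L[ℝ] ℝ) : I → ℓ.ker →L[ℝ] ℝ :=
  fun j => (n j).comp ℓ.ker.subtypeL

noncomputable def lev {I : Type*} [DecidableEq I] {E : Type*} [NormedAddCommGroup E] [NormedSpace ℝ E]
    (n : I → E →L[ℝ] ℝ) (i : I) (c : I → ℝ) (s : ℝ) : I → ℝ :=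
  Function.update (fun j => c j - n j (sliceU (n i)) * s) i 1

noncomputable def facet {I : Type*} [DecidableEq I] {E : Type*} [NormedAddCommGroup E] [NormedSpace ℝ E]
    [FiniteDimensional ℝ E] [MeasurableSpace E] [BorelSpace E] (μ : Measure E) [IsAddHaarMeasure μ]
    (n : I → E →L[ℝ] ℝ) (i : I) (c : I → ℝ) : ℝ :=
  open Classical in
  if n i = 0 then 0 else sliceK μ (n i) * vol addHaar (resN n (n i)) (lev n i c (c i))

def ND1 {I : Type*} {E : Type*} [NormedAddCommGroup E] [NormedSpace ℝ E]
    (n : I → E →L[ℝ] ℝ) (c : I → ℝ) : Prop :=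
  (∀ i, n i = 0 → c i ≠ 0) ∧ ∀ i j, i ≠ j → n i ≠ 0 → ∀ t : ℝ, n j = t • n i → c j ≠ t * c i

section
variable {I : Type*} [Fintype I] {E : Type*} [NormedAddCommGroup E] [NormedSpace ℝ E]
    [FiniteDimensional ℝ E]

theorem Kset_closed (n : I → E →L[ℝ] ℝ) (c : I → ℝ) : IsClosed (Kset n c) := by
  have : Kset n c = ⋂ i, {x | n i x ≤ c i} := by ext; simp [Kset]
  rw [this]
  exact isClosed_iInter fun i => isClosed_le (n i).continuous continuous_const

theorem Bdd.bound {n : I → E →L[ℝ] ℝ} (h : Bdd n) :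
    ∃ C : ℝ, 0 ≤ C ∧ ∀ c x, x ∈ Kset n c → ‖x‖ ≤ C * ∑ i, |c i| := by
  let g : E → ℝ := fun x => ∑ i, max (n i x) 0
  have hg : Continuous g := by fun_prop
  rcases (Metric.sphere (0 : E) 1).eq_empty_or_nonempty with he | hne
  · refine ⟨0, le_rfl, fun c x hx => ?_⟩
    by_cases h0 : x = 0
    · simp [h0]
    · have : (‖x‖⁻¹ • x) ∈ Metric.sphere (0 : E) 1 := by
        simp [norm_smul, h0]
      rw [he] at this
      exact absurd this (by simp)
  · obtain ⟨x0, hx0, hmin⟩ := (isCompact_sphere (0 : E) 1).exists_isMinOn hne hg.continuousOn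
    have hg0 : 0 < g x0 := by
      have h1 : 0 ≤ g x0 := Finset.sum_nonneg fun i _ => le_max_right _ _
      rcases h1.lt_or_eq with h1 | h1
      · exact h1
      · exfalso
        have h2 := (Finset.sum_eq_zero_iff_of_nonneg (fun i _ => le_max_right (n i x0) 0)).1 h1.symm
        have := h x0 fun i => by have := h2 i (Finset.mem_univ i); simpa using this
        simp [this] at hx0
    refine ⟨(g x0)⁻¹, by positivity, fun c x hx => ?_⟩
    by_cases h0 : x = 0
    · subst h0; simp only [norm_zero]; positivity
    have hxp : 0 < ‖x‖ := norm_pos_iff.2 h0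
    have h3 : g x0 ≤ g (‖x‖⁻¹ • x) := hmin (by simp [norm_smul, h0])
    have h4 : g (‖x‖⁻¹ • x) = ‖x‖⁻¹ * g x := by
      simp only [g, map_smul, smul_eq_mul, Finset.mul_sum]
      refine Finset.sum_congr rfl fun i _ => ?_
      rw [mul_max_of_nonneg _ _ (by positivity)]; simp
    have h5 : g x ≤ ∑ i, |c i| := by
      refine Finset.sum_le_sum fun i _ => ?_
      exact max_le ((hx i).trans (le_abs_self _)) (abs_nonneg _)
    rw [h4] at h3
    rw [inv_mul_eq_div, le_div_iff₀ hg0]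
    rw [inv_mul_eq_div, le_div_iff₀ hxp] at h3
    linarith

theorem Bdd.compact {n : I → E →L[ℝ] ℝ} (h : Bdd n) (c : I → ℝ) : IsCompact (Kset n c) := by
  obtain ⟨C, _, hC⟩ := h.bound
  refine (isCompact_closedBall (0 : E) (C * ∑ i, |c i|)).of_isClosed_subset (Kset_closed n c) ?_
  intro x hx
  simpa using hC c x hx

variable [MeasurableSpace E] [BorelSpace E] (μ : Measure E) [IsAddHaarMeasure μ]

theorem level_null (ℓ : E →L[ℝ] ℝ) (hℓ : ℓ ≠ 0) (s : ℝ) : μ {x | ℓ x = s} = 0 := by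
  obtain ⟨x0, hx0⟩ : ∃ x0, ℓ x0 = s := ⟨s • sliceU ℓ, by simp [sliceU_spec hℓ]⟩
  have h1 : μ (ℓ.ker : Set E) = 0 := by
    apply addHaar_submodule
    intro h
    apply hℓ
    ext x
    have : x ∈ ℓ.ker := by rw [h]; trivial
    simpa using this
  have h2 : {x | ℓ x = s} = (fun x => x0 + x) '' (ℓ.ker : Set E) := by
    ext x
    simp only [mem_ofPred_eq, mem_image, SetLike.mem_coe]
    constructor
    · intro h
      exact ⟨x - x0, by simp [h, hx0], by simp⟩
    · rintro ⟨z, hz, rfl⟩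
      have : ℓ z = 0 := by simpa using hz
      simp [hx0, this]
  rw [h2]
  simp [h1]

theorem vol_cont {n : I → E →L[ℝ] ℝ} (h : Bdd n) (c : I → ℝ) (h0 : ∀ i, n i = 0 → c i ≠ 0) :
    ContinuousAt (vol μ n) c := by
  have hb := h.compact (fun i => c i + 1)
  have key : Tendsto (fun c' => μ (Kset n c')) (𝓝 c) (𝓝 (μ (Kset n c))) := by
    refine tendsto_measure_of_ae_tendsto_indicator (𝓝 c) (Kset_closed n c).measurableSet
      (fun c' => (Kset_closed n c').measurableSet) hb.measurableSet hb.measure_lt_top.ne ?_ ?_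
    · have : ∀ᶠ c' in 𝓝 c, ∀ i, c' i < c i + 1 := by
        rw [eventually_all]
        intro i
        exact (continuous_apply i).continuousAt.eventually_lt continuousAt_const (by simp)
      filter_upwards [this] with c' hc' x hx i
      exact (hx i).trans (hc' i).le
    · have h1 : ∀ᵐ x ∂μ, ∀ i, n i x ≠ c i := by
        rw [ae_all_iff]
        intro i
        by_cases hi : n i = 0
        · refine Eventually.of_forall fun x => ?_
          simpa [hi] using (h0 i hi).symm
        · have := level_null μ (n i) hi (c i)
          rw [ae_iff]; simpa using this
      filter_upwards [h1] with x hx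
      have : ∀ᶠ c' in 𝓝 c, ∀ i, (n i x ≤ c' i ↔ n i x ≤ c i) := by
        rw [eventually_all]
        intro i
        rcases lt_or_gt_of_ne (hx i) with hi | hi
        · filter_upwards [(continuous_apply i).continuousAt.eventually_const_lt hi] with c' hc'
          exact ⟨fun _ => hi.le, fun _ => hc'.le⟩
        · filter_upwards [(continuous_apply i).continuousAt.eventually_lt_const hi] with c' hc'
          exact ⟨fun h => absurd hc' (not_lt.2 h), fun h => absurd hi (not_lt.2 h)⟩
      filter_upwards [this] with c' hc'
      exact forall_congr' hc'
  exact (ENNReal.tendsto_toReal (h.compact c).measure_lt_top.ne).comp key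

end

end CSV

namespace CSV
open MeasureTheory MeasureTheory.Measure Set Filter Topology
open scoped ENNReal Pointwise
set_option linter.unusedSectionVars false
section
variable {I : Type*} [Fintype I] [DecidableEq I] {E : Type*} [NormedAddCommGroup E] [NormedSpace ℝ E]
    [FiniteDimensional ℝ E]

theorem Bdd.res {n : I → E →L[ℝ] ℝ} (h : Bdd n) (ℓ : E →L[ℝ] ℝ) : Bdd (resN n ℓ) := by
  intro z hz
  ext
  exact h z hz

theorem resN_zero {n : I → E →L[ℝ] ℝ} {ℓ : E →L[ℝ] ℝ} (hℓ : ℓ ≠ 0) {j : I} (h : resN n ℓ j = 0) :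
    n j = (n j (sliceU ℓ)) • ℓ := by
  ext x
  have hx : x - ℓ x • sliceU ℓ ∈ ℓ.ker := by simp [sliceU_spec hℓ]
  have := DFunLike.congr_fun h ⟨_, hx⟩
  simp [resN] at this
  simp; linarith

theorem slice_eq (n : I → E →L[ℝ] ℝ) (i : I)  (c : I → ℝ) (s : ℝ) :
    {z : (n i).ker | s • sliceU (n i) + (z : E) ∈ {x | ∀ j, j ≠ i → n j x ≤ c j}}
      = Kset (resN n (n i)) (lev n i c s) := by
  ext z
  simp only [mem_ofPred_eq, Kset, resN, lev]
  refine forall_congr' fun j => ?_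
  by_cases hj : j = i
  · subst hj
    have : n j z = 0 := z.2
    simp [this]
  · simp [hj]
    constructor <;> intro h <;> linarith

theorem lev_continuous (n : I → E →L[ℝ] ℝ) (i : I) :
    Continuous (fun x : (I → ℝ) × ℝ => lev n i x.1 x.2) := by
  unfold lev
  fun_prop

variable [MeasurableSpace E] [BorelSpace E] (μ : Measure E) [IsAddHaarMeasure μ]

theorem sliceK_pos (ℓ : E →L[ℝ] ℝ) : 0 < sliceK μ ℓ := (exists_sliceK μ ℓ).choose_spec.1

theorem sliceK_spec {ℓ : E →L[ℝ] ℝ} (h : ℓ ≠ 0) {A : Set E} (hA : MeasurableSet A) :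
   μ A = ENNReal.ofReal (sliceK μ ℓ) *
        ∫⁻ s : ℝ, (addHaar : Measure ℓ.ker) {z | s • sliceU ℓ + (z : E) ∈ A} :=
  (exists_sliceK μ ℓ).choose_spec.2 h A hA

theorem lev_ne {n : I → E →L[ℝ] ℝ} {i : I} (hi : n i ≠ 0) {c : I → ℝ}
    (hc : ∀ j, j ≠ i → ∀ t : ℝ, n j = t • n i → c j ≠ t * c i) :
    ∀ j, resN n (n i) j = 0 → lev n i c (c i) j ≠ 0 := by
  intro j hj
  by_cases hji : j = i
  · subst hji; simp [lev]
  · simp [lev, hji]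
    have := hc j hji _ (resN_zero hi hj)
    intro h; apply this; linarith

theorem section_meas (n : I → E →L[ℝ] ℝ) (i : I)  (c : I → ℝ) :
    Measurable (fun s => vol addHaar (resN n (n i)) (lev n i c s)) := by
  have hA : MeasurableSet {x | ∀ j, j ≠ i → n j x ≤ c j} := by
    have : IsClosed {x | ∀ j, j ≠ i → n j x ≤ c j} := by
      simp only [ofPred_forall]
      exact isClosed_iInter fun j => isClosed_iInter fun _ => isClosed_le (n j).continuous continuous_const
    exact this.measurableSet
  have := (slicing_meas (n i) (sliceU (n i)) _ hA).ennreal_toReal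
  simp_rw [slice_eq] at this
  exact this

theorem vol_nonneg (n : I → E →L[ℝ] ℝ) (c : I → ℝ) : 0 ≤ vol μ n c := measureReal_nonneg

theorem vol_update {n : I → E →L[ℝ] ℝ} (h : Bdd n) {i : I} (hi : n i ≠ 0) (c : I → ℝ) (t : ℝ) :
    IntegrableOn (fun s => vol addHaar (resN n (n i)) (lev n i c s)) (Iic t) ∧
    vol μ n (Function.update c i t) =
      sliceK μ (n i) * ∫ s in Iic t, vol addHaar (resN n (n i)) (lev n i c s) := by
  have hK := h.compact (Function.update c i t)
  have h1 := sliceK_spec μ hi hK.measurableSet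
  have hfin := hK.measure_lt_top (μ := μ)
  have h2 : (fun s : ℝ => (addHaar : Measure (n i).ker) {z | s • sliceU (n i) + (z : E) ∈
      Kset n (Function.update c i t)}) =
      (Iic t).indicator fun s => ENNReal.ofReal (vol addHaar (resN n (n i)) (lev n i c s)) := by
    ext s
    by_cases hs : s ∈ Iic t
    · rw [indicator_of_mem hs, vol, Measure.real, ENNReal.ofReal_toReal
        ((h.res (n i)).compact _).measure_lt_top.ne, ← slice_eq]
      congr 1
      ext z
      simp only [Kset, mem_ofPred_eq]
      refine forall_congr' fun j => ?_
      by_cases hj : j = i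
      · subst hj
        have : n j z = 0 := z.2
        simpa [this, sliceU_spec hi] using hs
      · simp [hj]
    · rw [indicator_of_notMem hs]
      refine (congrArg _ ?_).trans (measure_empty (μ := (addHaar : Measure (n i).ker)))
      ext z
      simp only [Kset, mem_ofPred_eq, mem_empty_iff_false, iff_false, not_forall]
      refine ⟨i, ?_⟩
      have : n i z = 0 := z.2
      simpa [this, sliceU_spec hi] using hs
  rw [h2, lintegral_indicator measurableSet_Iic] at h1
  have hm := section_meas n i c
  have hIntg : IntegrableOn (fun s => vol addHaar (resN n (n i)) (lev n i c s)) (Iic t) := by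
    refine ⟨hm.aestronglyMeasurable, ?_⟩
    rw [hasFiniteIntegral_iff_ofReal (Eventually.of_forall fun _ => vol_nonneg _ _ _)]
    rw [h1] at hfin
    by_contra hcon
    simp only [not_lt, top_le_iff] at hcon
    rw [hcon, ENNReal.mul_top (by simpa using sliceK_pos μ (n i))] at hfin
    simp at hfin
  refine ⟨hIntg, ?_⟩
  rw [vol, Measure.real, h1, ENNReal.toReal_mul, ENNReal.toReal_ofReal (sliceK_pos μ _).le]
  rw [integral_eq_lintegral_of_nonneg_ae (Eventually.of_forall fun _ => vol_nonneg _ _ _)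
    hm.aestronglyMeasurable]

theorem partial_deriv {n : I → E →L[ℝ] ℝ} (h : Bdd n) {i : I} {c : I → ℝ} (hc0 : n i = 0 → c i ≠ 0)
    (hc : n i ≠ 0 → ∀ j, j ≠ i → ∀ t : ℝ, n j = t • n i → c j ≠ t * c i) :
    HasDerivAt (fun t => vol μ n (Function.update c i t)) (facet μ n i c) (c i) := by
  by_cases hi : n i = 0
  · rw [facet, if_pos hi]
    have : (fun t => vol μ n (Function.update c i t)) =ᶠ[𝓝 (c i)] fun _ => vol μ n c := by
      have h1 : ∀ᶠ t in 𝓝 (c i), (0 ≤ t ↔ 0 ≤ c i) := by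
        rcases lt_or_gt_of_ne (hc0 hi) with h | h
        · filter_upwards [eventually_lt_nhds h] with t ht
          exact ⟨fun h => absurd ht (not_lt.2 h), fun h' => absurd h (not_lt.2 h')⟩
        · filter_upwards [eventually_gt_nhds h] with t ht
          exact ⟨fun _ => h.le, fun _ => ht.le⟩
      filter_upwards [h1] with t ht
      simp only [vol]
      congr 1
      ext x
      simp only [Kset, mem_ofPred_eq]
      refine forall_congr' fun j => ?_
      by_cases hj : j = i
      · subst hj; simpa [hi] using ht
      · simp [hj]
    exact (hasDerivAt_const (c i) (vol μ n c)).congr_of_eventuallyEq this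
  · rw [facet, if_neg hi]
    have hcont : ContinuousAt (fun s => vol addHaar (resN n (n i)) (lev n i c s)) (c i) := by
      have h1 := vol_cont addHaar (h.res (n i)) (lev n i c (c i)) (lev_ne hi (hc hi))
      have h2 : ContinuousAt (fun s => lev n i c s) (c i) :=
        ((lev_continuous n i).comp (by fun_prop : Continuous fun s : ℝ => (c, s))).continuousAt
      exact ContinuousAt.comp (f := fun s => lev n i c s) h1 h2
    simp_rw [fun t => (vol_update μ h hi c t).2]
    apply HasDerivAt.const_mul
    have hIntg := fun t => (vol_update μ h hi c t).1
    have h3 : ∀ t, ∫ s in Iic t, vol addHaar (resN n (n i)) (lev n i c s) =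
        (∫ s in Iic (c i), vol addHaar (resN n (n i)) (lev n i c s)) +
         ∫ s in (c i)..t, vol addHaar (resN n (n i)) (lev n i c s) := by
      intro t
      rw [← intervalIntegral.integral_Iic_sub_Iic (hIntg _) (hIntg _)]; ring
    rw [funext h3]
    apply HasDerivAt.const_add
    apply intervalIntegral.integral_hasDerivAt_right
    · simp
    · exact (section_meas n i c).stronglyMeasurable.stronglyMeasurableAtFilter
    · exact hcont

theorem facet_cont {n : I → E →L[ℝ] ℝ} (h : Bdd n) {i : I} {c : I → ℝ}
    (hc : n i ≠ 0 → ∀ j, j ≠ i → ∀ t : ℝ, n j = t • n i → c j ≠ t * c i) :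
    ContinuousAt (facet μ n i) c := by
  by_cases hi : n i = 0
  · have : facet μ n i = fun _ => 0 := by ext c; simp [facet, hi]
    rw [this]; exact continuousAt_const
  · have : facet μ n i = fun c => sliceK μ (n i) * vol addHaar (resN n (n i)) (lev n i c (c i)) := by
      ext c; simp [facet, hi]
    rw [this]
    have h1 := vol_cont addHaar (h.res (n i)) (lev n i c (c i)) (lev_ne hi (hc hi))
    have h2 : ContinuousAt (fun c : I → ℝ => lev n i c (c i)) c :=
        ((lev_continuous n i).comp (by fun_prop : Continuous fun c : I → ℝ => (c, c i))).continuousAt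
    exact continuousAt_const.mul (ContinuousAt.comp (f := fun c : I → ℝ => lev n i c (c i)) h1 h2)

theorem ND1.eventually {n : I → E →L[ℝ] ℝ} {c : I → ℝ} (h : ND1 n c) : ∀ᶠ c' in 𝓝 c, ND1 n c' := by
  have h1 : ∀ᶠ c' in 𝓝 c, ∀ i, n i = 0 → c' i ≠ 0 := by
    rw [eventually_all]; intro i
    by_cases hi : n i = 0
    · filter_upwards [(continuous_apply i).continuousAt.eventually_ne (h.1 i hi)] with c' hc' _
      exact hc'
    · simp [hi]
  have h2 : ∀ᶠ c' in 𝓝 c, ∀ i j, i ≠ j → n i ≠ 0 → ∀ t : ℝ, n j = t • n i → c' j ≠ t * c' i := by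
    rw [eventually_all]; intro i
    rw [eventually_all]; intro j
    by_cases hij : i = j
    · simp [hij]
    by_cases hi : n i = 0
    · simp [hi]
    by_cases ht : ∃ t : ℝ, n j = t • n i
    · obtain ⟨t, ht⟩ := ht
      have : c j - t * c i ≠ 0 := sub_ne_zero.2 (h.2 i j hij hi t ht)
      have hc : Continuous fun c : I → ℝ => c j - t * c i := by fun_prop
      filter_upwards [hc.continuousAt.eventually_ne this] with c' hc' _ _ s hs
      have : s = t := by
        rw [ht] at hs
        exact (smul_left_injective ℝ hi hs).symm
      rw [this]; exact sub_ne_zero.1 hc'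
    · refine Eventually.of_forall fun c' _ _ s hs => absurd ⟨s, hs⟩ ht
  filter_upwards [h1, h2] with c' a b
  exact ⟨a, b⟩

end

theorem hasFDerivAt_of_partials {I : Type*} [Fintype I] [DecidableEq I] (f : (I → ℝ) → ℝ)
    (f' : I → (I → ℝ) → ℝ) (c : I → ℝ)
    (h : ∀ᶠ x in 𝓝 c, ∀ i, HasDerivAt (fun t => f (Function.update x i t)) (f' i x) (x i))
    (hc : ∀ i, ContinuousAt (f' i) c) :
    HasFDerivAt f (∑ i, f' i c • (ContinuousLinearMap.proj i : (I → ℝ) →L[ℝ] ℝ)) c := by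
  let P : Finset I → (I → ℝ) → (I → ℝ) := fun S x j => if j ∈ S then x j else c j
  have key : ∀ S : Finset I, (fun x => f (P S x) - f c - ∑ i ∈ S, f' i c * (x i - c i))
      =o[𝓝 c] fun x => x - c := by
    intro S
    induction S using Finset.induction_on with
    | empty =>
      have : ∀ x, P ∅ x = c := fun x => by ext; simp [P]
      simp [this]
    | insert i S hi ih =>
      have : (fun x => f (P (insert i S) x) - f (P S x) - f' i c * (x i - c i))
        =o[𝓝 c] fun x => x - c := by
        rw [Asymptotics.isLittleO_iff]
        intro ε hε
        have h1 : ∀ᶠ x in 𝓝 c, (∀ i, HasDerivAt (fun t => f (Function.update x i t)) (f' i x) (x i))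
            ∧ ‖f' i x - f' i c‖ < ε := by
          refine h.and ?_
          have := (hc i).sub_const (f' i c) |>.norm
          exact this.eventually_lt continuousAt_const (by simpa)
        obtain ⟨δ, hδ, hb⟩ := Metric.eventually_nhds_iff_ball.1 h1
        filter_upwards [Metric.ball_mem_nhds c hδ] with x hx
        have hx' : ∀ j, |x j - c j| < δ := by
          intro j
          have := (dist_pi_lt_iff hδ).1 hx j
          simpa [Real.dist_eq] using this
        have hup : ∀ t, |t - c i| < δ → Function.update (P S x) i t ∈ Metric.ball c δ := by
          intro t ht
          rw [Metric.mem_ball, dist_pi_lt_iff hδ]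
          intro j
          by_cases hj : j = i
          · subst hj; simpa [Real.dist_eq] using ht
          · simp only [Function.update_of_ne hj, P]
            split_ifs
            · simpa [Real.dist_eq] using hx' j
            · simpa
        have e1 : P (insert i S) x = Function.update (P S x) i (x i) := by
          ext j
          by_cases hj : j = i
          · subst hj; simp [P]
          · simp [P, hj]
        have e2 : P S x = Function.update (P S x) i (c i) := by
          ext j
          by_cases hj : j = i
          · subst hj; simp [P, hi]
          · simp [hj]
        have hconv := (convex_ball (c i) δ).norm_image_sub_le_of_norm_hasDerivWithin_le
          (f := fun t => f (Function.update (P S x) i t) - f' i c * t)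
          (f' := fun t => f' i (Function.update (P S x) i t) - f' i c) (C := ε)
          (x := c i) (y := x i) (by
            intro t ht
            have ht' : |t - c i| < δ := by simpa [Real.dist_eq] using ht
            have := (hb _ (hup t ht')).1 i
            simp only [Function.update_idem, Function.update_self] at this
            have h2 := this.sub ((hasDerivAt_id t).const_mul (f' i c))
            simp only [id, mul_one] at h2
            exact h2.hasDerivWithinAt) (by
            intro t ht
            have ht' : |t - c i| < δ := by simpa [Real.dist_eq] using ht
            exact (hb _ (hup t ht')).2.le) (by simpa using hδ) (by simpa [Real.dist_eq] using hx' i)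
        rw [← e1, ← e2] at hconv
        calc _ = ‖f (P (insert i S) x) - f' i c * x i - (f (P S x) - f' i c * c i)‖ := by
              congr 1; ring
          _ ≤ ε * ‖x i - c i‖ := hconv
          _ ≤ ε * ‖x - c‖ := by
            gcongr
            exact norm_le_pi_norm (x - c) i
      refine (ih.add this).congr_left fun x => ?_
      rw [Finset.sum_insert hi]; ring
  have := key Finset.univ
  have hP : ∀ x, P Finset.univ x = x := fun x => by ext; simp [P]
  simp only [hP] at this
  rw [hasFDerivAt_iff_isLittleO]
  refine this.congr_left fun x => ?_
  simp

section
variable {I : Type*} [Fintype I] [DecidableEq I] {E : Type*} [NormedAddCommGroup E] [NormedSpace ℝ E]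
    [FiniteDimensional ℝ E] [MeasurableSpace E] [BorelSpace E] (μ : Measure E) [IsAddHaarMeasure μ]

/-- gradient of the volume -/
noncomputable def grad (n : I → E →L[ℝ] ℝ) (c : I → ℝ) : (I → ℝ) →L[ℝ] ℝ :=
  ∑ i, facet μ n i c • (ContinuousLinearMap.proj i : (I → ℝ) →L[ℝ] ℝ)

theorem vol_hasFDerivAt {n : I → E →L[ℝ] ℝ} (h : Bdd n) {c : I → ℝ} (hc : ND1 n c) :
    HasFDerivAt (vol μ n) (grad μ n c) c := by
  apply hasFDerivAt_of_partials
  · filter_upwards [hc.eventually] with x hx i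
    exact partial_deriv μ h (hx.1 i) fun hi j hj => hx.2 i j hj.symm hi
  · intro i
    exact facet_cont μ h fun hi j hj => hc.2 i j hj.symm hi

theorem vol_logconcave {n : I → E →L[ℝ] ℝ} (h : Bdd n) (c c' : I → ℝ) :
    vol μ n c * vol μ n c' ≤ vol μ n ((2⁻¹ : ℝ) • (c + c')) ^ 2 := by
  have := bm μ rfl (Kset n c) (Kset n c') (Kset n ((2⁻¹ : ℝ) • (c + c'))) (h.compact _) (h.compact _)
    (h.compact _) (by
      intro x hx y hy i
      have := hx i
      have := hy i
      simp
      linarith)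
  have h3 := ENNReal.toReal_mono (by
          exact ENNReal.pow_ne_top (h.compact _).measure_lt_top.ne) this
  simpa [Measure.real, vol] using h3

end
end CSV

namespace CSV
open MeasureTheory MeasureTheory.Measure Set Filter Topology
open scoped ENNReal Pointwise
set_option linter.unusedSectionVars false

theorem real_logconcave (g g' : ℝ → ℝ) (g2 : ℝ) (h1 : ∀ᶠ t in 𝓝 0, HasDerivAt g (g' t) t)
    (h2 : HasDerivAt g' g2 0) (h : ∀ t, g t * g (-t) ≤ g 0 ^ 2) : g 0 * g2 ≤ g' 0 ^ 2 := by
  by_contra hcon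
  push Not at hcon
  let k : ℝ → ℝ := fun t => g t * g (-t)
  have hneg : Tendsto (fun t : ℝ => -t) (𝓝 0) (𝓝 0) := by
    simpa using (continuous_neg.tendsto (0:ℝ))
  have hg1 := h1.self_of_nhds
  have hk1 : ∀ᶠ t in 𝓝 0, HasDerivAt k (g' t * g (-t) - g t * g' (-t)) t := by
    filter_upwards [h1, hneg.eventually h1] with t ht ht'
    have := ht.mul (ht'.scomp t (hasDerivAt_neg t))
    refine this.congr_deriv ?_
    simp only [Function.comp_apply, smul_eq_mul]; ring
  have hd : deriv k =ᶠ[𝓝 0] fun t => g' t * g (-t) - g t * g' (-t) := by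
    filter_upwards [hk1] with t ht using ht.deriv
  have hk2 : HasDerivAt (deriv k) (2 * (g 0 * g2 - g' 0 ^ 2)) 0 := by
    refine HasDerivAt.congr_of_eventuallyEq ?_ hd
    have e0 : HasDerivAt (fun t => g (-t)) (- g' 0) 0 := by
      have := HasDerivAt.scomp (x := (0:ℝ)) (h := fun t : ℝ => -t) (g₁ := g) (g₁' := g' 0) (by simpa using hg1) (hasDerivAt_neg 0)
      simpa [Function.comp_def] using this
    have e1 : HasDerivAt (fun t => g' (-t)) (- g2) 0 := by
      have := HasDerivAt.scomp (x := (0:ℝ)) (h := fun t : ℝ => -t) (g₁ := g') (g₁' := g2) (by simpa using h2) (hasDerivAt_neg 0)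
      simpa [Function.comp_def] using this
    have := (h2.mul e0).sub (hg1.mul e1)
    refine this.congr_deriv ?_
    simp; ring
  have hmin : IsLocalMin k 0 := by
    apply isLocalMin_of_deriv_deriv_pos
    · rw [hk2.deriv]; linarith
    · rw [hk1.self_of_nhds.deriv]; simp; ring
    · exact hk1.self_of_nhds.continuousAt
  have hconst : k =ᶠ[𝓝 0] fun _ => k 0 := by
    filter_upwards [hmin] with t ht
    refine le_antisymm ?_ ht
    have := h t
    simp only [k, neg_zero]
    nlinarith
  have := hconst.deriv.deriv_eq
  rw [hk2.deriv] at this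
  simp at this
  linarith

section
variable {I : Type*} [Fintype I] [DecidableEq I] {E : Type*} [NormedAddCommGroup E] [NormedSpace ℝ E]
    [FiniteDimensional ℝ E]

def ND2 (n : I → E →L[ℝ] ℝ) (c : I → ℝ) : Prop :=
  ND1 n c ∧ ∀ i, n i ≠ 0 → ND1 (resN n (n i)) (lev n i c (c i))

noncomputable def levL (n : I → E →L[ℝ] ℝ) (i : I) : (I → ℝ) →L[ℝ] (I → ℝ) :=
  ContinuousLinearMap.pi fun j => if j = i then 0 else
    ContinuousLinearMap.proj j - n j (sliceU (n i)) • ContinuousLinearMap.proj i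

theorem levL_apply (n : I → E →L[ℝ] ℝ) (i : I) (f : I → ℝ) (j : I) :
    levL n i f j = if j = i then 0 else f j - n j (sliceU (n i)) * f i := by
  simp only [levL, ContinuousLinearMap.coe_pi']
  split_ifs <;> simp

theorem lev_eq (n : I → E →L[ℝ] ℝ) (i : I) (c : I → ℝ) :
    lev n i c (c i) = levL n i c + Pi.single i 1 := by
  ext j
  rw [Pi.add_apply, levL_apply, lev]
  by_cases hj : j = i
  · subst hj; simp
  · simp [hj]

theorem lev_hasFDerivAt (n : I → E →L[ℝ] ℝ) (i : I) (c : I → ℝ) :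
    HasFDerivAt (fun c : I → ℝ => lev n i c (c i)) (levL n i) c := by
  simp_rw [lev_eq]
  exact (levL n i).hasFDerivAt.add_const _

variable [MeasurableSpace E] [BorelSpace E] (μ : Measure E) [IsAddHaarMeasure μ]

noncomputable def dfacet (n : I → E →L[ℝ] ℝ) (i : I) (c : I → ℝ) : (I → ℝ) →L[ℝ] ℝ :=
  open Classical in
  if n i = 0 then 0 else sliceK μ (n i) •
    (grad addHaar (resN n (n i)) (lev n i c (c i))).comp (levL n i)

theorem facet_hasFDerivAt {n : I → E →L[ℝ] ℝ} (h : Bdd n) {c : I → ℝ} (hc : ND2 n c) (i : I) :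
    HasFDerivAt (facet μ n i) (dfacet μ n i c) c := by
  by_cases hi : n i = 0
  · have : facet μ n i = fun _ => 0 := by ext c; simp [facet, hi]
    rw [this, dfacet, if_pos hi]
    exact hasFDerivAt_const _ _
  · have : facet μ n i = fun c => sliceK μ (n i) * vol addHaar (resN n (n i)) (lev n i c (c i)) := by
      ext c; simp [facet, hi]
    rw [this, dfacet, if_neg hi]
    apply HasFDerivAt.const_mul
    exact (vol_hasFDerivAt addHaar (h.res (n i)) (hc.2 i hi)).comp c (lev_hasFDerivAt n i c)

noncomputable def hess (n : I → E →L[ℝ] ℝ) (c : I → ℝ) : (I → ℝ) →L[ℝ] (I → ℝ) →L[ℝ] ℝ :=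
  ∑ i, (dfacet μ n i c).smulRight (ContinuousLinearMap.proj i : (I → ℝ) →L[ℝ] ℝ)

theorem hess_apply (n : I → E →L[ℝ] ℝ) (c f g : I → ℝ) :
    hess μ n c f g = ∑ i, dfacet μ n i c f * g i := by
  simp [hess]

theorem grad_apply (n : I → E →L[ℝ] ℝ) (c f : I → ℝ) :
    grad μ n c f = ∑ i, facet μ n i c * f i := by
  simp [grad]

theorem grad_hasFDerivAt {n : I → E →L[ℝ] ℝ} (h : Bdd n) {c : I → ℝ} (hc : ND2 n c) :
    HasFDerivAt (grad μ n) (hess μ n c) c := by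
  unfold grad hess
  apply HasFDerivAt.fun_sum
  intro i _
  exact (facet_hasFDerivAt μ h hc i).smul_const (ContinuousLinearMap.proj i : (I → ℝ) →L[ℝ] ℝ)

theorem hess_symm {n : I → E →L[ℝ] ℝ} (h : Bdd n) {c : I → ℝ} (hc : ND2 n c) (f g : I → ℝ) :
    hess μ n c f g = hess μ n c g f :=
  second_derivative_symmetric_of_eventually (f := vol μ n) (f' := grad μ n)
    (by filter_upwards [hc.1.eventually] with y hy using vol_hasFDerivAt μ h hy)
    (grad_hasFDerivAt μ h hc) f g

theorem line_deriv1 {n : I → E →L[ℝ] ℝ} (h : Bdd n) {c : I → ℝ} (hc : ND1 n c) (f : I → ℝ) :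
    ∀ᶠ t : ℝ in 𝓝 0, HasDerivAt (fun t : ℝ => vol μ n (c + t • f)) (grad μ n (c + t • f) f) t := by
  have hl : Continuous fun t : ℝ => c + t • f := by fun_prop
  have : ∀ᶠ t : ℝ in 𝓝 0, ND1 n (c + t • f) := by
    have h1 := hl.tendsto 0
    simp only [zero_smul, add_zero] at h1
    exact h1.eventually hc.eventually
  filter_upwards [this] with t ht
  have h1 : HasDerivAt (fun t : ℝ => c + t • f) f t := by
    simpa using ((hasDerivAt_id t).smul_const f).const_add c
  exact (vol_hasFDerivAt μ h ht).comp_hasDerivAt t h1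

theorem line_deriv2 {n : I → E →L[ℝ] ℝ} (h : Bdd n) {c : I → ℝ} (hc : ND2 n c) (f g : I → ℝ) :
    HasDerivAt (fun t : ℝ => grad μ n (c + t • f) g) (hess μ n c f g) 0 := by
  have h1 : HasDerivAt (fun t : ℝ => c + t • f) f 0 := by
    simpa using ((hasDerivAt_id (0:ℝ)).smul_const f).const_add c
  have h2 : HasFDerivAt (grad μ n) (hess μ n c) (c + (0:ℝ) • f) := by
    simpa using grad_hasFDerivAt μ h hc
  have := h2.comp_hasDerivAt (0:ℝ) h1
  have h3 := this.clm_apply (hasDerivAt_const (0:ℝ) g)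
  simpa using h3

theorem hess_le {n : I → E →L[ℝ] ℝ} (h : Bdd n) {c : I → ℝ} (hc : ND2 n c) (f : I → ℝ) :
    vol μ n c * hess μ n c f f ≤ grad μ n c f ^ 2 := by
  have := real_logconcave (fun t => vol μ n (c + t • f)) (fun t => grad μ n (c + t • f) f)
    (hess μ n c f f) (line_deriv1 μ h hc.1 f) (line_deriv2 μ h hc f f) (by
      intro t
      convert vol_logconcave μ h (c + t • f) (c + (-t) • f) using 3
      ext i; simp; ring)
  simpa using this

theorem hess_ker {n : I → E →L[ℝ] ℝ} (h : Bdd n) {c : I → ℝ} (hc : ND2 n c) (hv : 0 < vol μ n c)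
    {f : I → ℝ} (hf1 : grad μ n c f = 0) (hf2 : hess μ n c f f = 0) (g : I → ℝ) :
    hess μ n c f g = 0 := by
  have key : ∀ s : ℝ, 2 * s * (vol μ n c * hess μ n c f g) +
      (vol μ n c * hess μ n c g g - grad μ n c g ^ 2) ≤ 0 := by
    intro s
    have := hess_le μ h hc (s • f + g)
    have hs := hess_symm μ h hc g f
    simp only [map_add, map_smul, _root_.add_apply, _root_.smul_apply, hf1, hf2, hs, smul_eq_mul] at this
    linarith
  set a := vol μ n c * hess μ n c f g with ha
  set b := vol μ n c * hess μ n c g g - grad μ n c g ^ 2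
  have ha0 : a = 0 := by
    by_contra h0
    have := key ((1 - b) / (2 * a))
    have e : 2 * ((1 - b) / (2 * a)) * a = 1 - b := by field_simp
    rw [e] at this
    linarith
  exact (mul_eq_zero.1 ha0).resolve_left hv.ne'

end
end CSV

namespace CSV
open MeasureTheory MeasureTheory.Measure Set Filter Topology
open scoped ENNReal Pointwise
set_option linter.unusedSectionVars false

section
variable {I : Type*} [Fintype I] [DecidableEq I] {E : Type*} [NormedAddCommGroup E] [NormedSpace ℝ E]
    [FiniteDimensional ℝ E]

structure Good (n : I → E →L[ℝ] ℝ) (ι : I → I) : Prop where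
  bdd : Bdd n
  symm : ∀ i, n (ι i) = - n i
  expo : ∀ i, ∃ x, n i x = 1 ∧ ∀ j, j ≠ i → n j x < 1

theorem ND2_of {n : I → E →L[ℝ] ℝ} {c : I → ℝ} (h1 : ND1 n c)
    (h2 : ∀ i j k, i ≠ j → i ≠ k → j ≠ k → n i ≠ 0 → (∀ r : ℝ, n j ≠ r • n i) →
      ∀ t s : ℝ, n k = t • n j + s • n i → c k ≠ t * c j + s * c i) : ND2 n c := by
  letI : MeasurableSpace E := borel E
  haveI : BorelSpace E := ⟨rfl⟩
  refine ⟨h1, fun i hi => ⟨lev_ne hi fun j hj => h1.2 i j hj.symm hi, ?_⟩⟩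
  intro j k hjk hj t ht
  have hji : j ≠ i := by
    rintro rfl
    apply hj
    ext z
    exact z.2
  by_cases hki : k = i
  · subst hki
    have h0 : resN n (n k) k = 0 := by ext z; exact z.2
    have : t = 0 := by
      rw [h0] at ht
      exact (smul_eq_zero.1 ht.symm).resolve_right hj
    simp [lev, this]
  · have hk : n k = t • n j + (n k (sliceU (n i)) - t * n j (sliceU (n i))) • n i := by
      ext x
      have hx : x - n i x • sliceU (n i) ∈ (n i).ker := by simp [sliceU_spec hi]
      have := DFunLike.congr_fun ht ⟨_, hx⟩
      simp [resN] at this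
      simp; linarith
    have := h2 i j k hji.symm (Ne.symm hki) hjk hi (by
      intro r hr
      apply hj
      ext z
      have : n i z = 0 := z.2
      simp [resN, hr, this]) _ _ hk
    simp only [lev, ne_eq, hki, not_false_eq_true, Function.update_of_ne, hji]
    intro h
    apply this
    linarith

namespace Good
variable {n : I → E →L[ℝ] ℝ} {ι : I → I} (h : Good n ι)
include h

theorem ne (i : I) : n i ≠ 0 := by
  obtain ⟨x, hx, _⟩ := h.expo i
  intro h0
  simp [h0] at hx

theorem inj {i j : I} (hij : i ≠ j) : n i ≠ n j := by
  intro he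
  obtain ⟨x, hx, hx'⟩ := h.expo i
  have := hx' j hij.symm
  rw [← he] at this
  linarith

theorem nd1 : ND1 n 1 := by
  refine ⟨fun i hi => absurd hi (h.ne i), fun i j hij _ t ht => ?_⟩
  simp only [Pi.one_apply, mul_one]
  rintro rfl
  exact h.inj hij (by simp [ht])

theorem nocol {i j k : I} (hij : i ≠ j) (hik : i ≠ k) (hjk : j ≠ k) (t : ℝ) :
    n k ≠ t • n j + (1 - t) • n i := by
  intro he
  have hx : ∀ x, n k x = t * n j x + (1 - t) * n i x := fun x => by simp [he]
  rcases lt_or_ge t 0 with h0 | h0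
  · obtain ⟨x, h1, h2⟩ := h.expo i
    have := hx x
    have := h2 j hij.symm
    have := h2 k hik.symm
    nlinarith
  · rcases le_or_gt t 1 with h3 | h3
    · obtain ⟨x, h1, h2⟩ := h.expo k
      have := hx x
      have a1 := h2 j hjk
      have a2 := h2 i hik
      rcases eq_or_lt_of_le h0 with h5 | h5
      · rw [← h5] at this; linarith
      · nlinarith [mul_pos h5 (sub_pos.2 a1), mul_nonneg (sub_nonneg.2 h3) (sub_pos.2 a2).le]
    · obtain ⟨x, h1, h2⟩ := h.expo j
      have := hx x
      have := h2 i hij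
      have := h2 k hjk.symm
      nlinarith

theorem nd2 : ND2 n 1 := by
  refine ND2_of h.nd1 fun i j k hij hik hjk _ _ t s he => ?_
  simp only [Pi.one_apply, mul_one]
  intro hs
  have : s = 1 - t := by linarith
  rw [this] at he
  exact h.nocol hij hik hjk t he

theorem neg_mem {x : E} (hx : x ∈ Kset n 1) : -x ∈ Kset n 1 := by
  intro i
  have := hx (ι i)
  rw [h.symm] at this
  simpa using this

theorem abs_le {x : E} (hx : x ∈ Kset n 1) (i : I) : |n i x| ≤ 1 := by
  rw [abs_le']
  have := h.neg_mem hx i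
  exact ⟨hx i, by simpa using this⟩

end Good

theorem vol_pos [MeasurableSpace E] [BorelSpace E] (μ : Measure E) [IsAddHaarMeasure μ]
    {n : I → E →L[ℝ] ℝ} (hb : Bdd n) {c : I → ℝ} (x : E) (hx : ∀ i, n i x < c i) :
    0 < vol μ n c := by
  have ho : IsOpen {x | ∀ i, n i x < c i} := by
    simp only [ofPred_forall]
    exact isOpen_iInter_of_finite fun i => isOpen_lt (n i).continuous continuous_const
  have := ho.measure_pos μ ⟨x, hx⟩
  have h2 : μ {x | ∀ i, n i x < c i} ≤ μ (Kset n c) := measure_mono fun x hx i => (hx i).le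
  exact ENNReal.toReal_pos (this.trans_le h2).ne' (hb.compact c).measure_lt_top.ne

theorem facet_pos [MeasurableSpace E] [BorelSpace E] (μ : Measure E) [IsAddHaarMeasure μ]
    {n : I → E →L[ℝ] ℝ} (hb : Bdd n) {c : I → ℝ} {i : I} (hi : n i ≠ 0) (x : E) (hxi : n i x = c i)
    (hx : ∀ j, j ≠ i → n j x < c j) :
    0 < facet μ n i c := by
  rw [facet, if_neg hi]
  refine mul_pos (sliceK_pos μ _) (vol_pos _ (hb.res _) ⟨x - c i • sliceU (n i), ?_⟩ ?_)
  · simp [sliceU_spec hi, hxi]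
  · intro j
    by_cases hj : j = i
    · subst hj
      simp [resN, lev, sliceU_spec hi, hxi]
    · have := hx j hj
      simp [resN, lev, hj]
      linarith

theorem facet_nonneg [MeasurableSpace E] [BorelSpace E] (μ : Measure E) [IsAddHaarMeasure μ]
    (n : I → E →L[ℝ] ℝ)  (c : I → ℝ) (i : I) : 0 ≤ facet μ n i c := by
  rw [facet]
  split_ifs
  · exact le_rfl
  · exact mul_nonneg (sliceK_pos μ _).le (vol_nonneg _ _ _)

/-- cut systems -/
def cutn (n : I → E →L[ℝ] ℝ) (θ : E →L[ℝ] ℝ) : Option I → E →L[ℝ] ℝ := fun o => o.elim θ n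
def cutc (c : I → ℝ) (s : ℝ) : Option I → ℝ := fun o => o.elim s c

@[simp] theorem cutn_none (n : I → E →L[ℝ] ℝ) (θ : E →L[ℝ] ℝ) : cutn n θ none = θ := rfl
@[simp] theorem cutn_some (n : I → E →L[ℝ] ℝ) (θ : E →L[ℝ] ℝ) (i : I) : cutn n θ (some i) = n i := rfl
@[simp] theorem cutc_none (c : I → ℝ) (s : ℝ) : cutc c s none = s := rfl
@[simp] theorem cutc_some (c : I → ℝ) (s : ℝ) (i : I) : cutc c s (some i) = c i := rfl

theorem cut_bdd {n : I → E →L[ℝ] ℝ} (h : Bdd n) (θ : E →L[ℝ] ℝ) : Bdd (cutn n θ) :=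
  fun x hx => h x fun i => hx (some i)

theorem cutc_line (c f : I → ℝ) (s f0 t : ℝ) :
    cutc c s + t • cutc f f0 = cutc (c + t • f) (s + t * f0) := by
  ext o
  cases o <;> simp

theorem mem_cut (n : I → E →L[ℝ] ℝ) (θ : E →L[ℝ] ℝ) (c : I → ℝ) (s : ℝ) (x : E) :
    x ∈ Kset (cutn n θ) (cutc c s) ↔ x ∈ Kset n c ∧ θ x ≤ s := by
  simp only [Kset, mem_ofPred_eq]
  constructor
  · intro h; exact ⟨fun i => h (some i), h none⟩
  · rintro ⟨h1, h2⟩ o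
    cases o
    · exact h2
    · exact h1 _

/-- `H` is the max of `θ` on `K`. -/
def IsH (n : I → E →L[ℝ] ℝ) (θ : E →L[ℝ] ℝ) (H : ℝ) : Prop :=
  0 < H ∧ (∃ x ∈ Kset n 1, θ x = H) ∧ ∀ x ∈ Kset n 1, |θ x| ≤ H

namespace Good
variable {n : I → E →L[ℝ] ℝ} {ι : I → I} (h : Good n ι)
include h

theorem exists_H {θ : E →L[ℝ] ℝ} (hθ : θ ≠ 0) : ∃ H, IsH n θ H := by
  have hK := h.bdd.compact 1
  have h0 : (0 : E) ∈ Kset n 1 := fun i => by simp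
  obtain ⟨x0, hx0, hmax⟩ := hK.exists_isMaxOn ⟨0, h0⟩ θ.continuous.continuousOn
  have hb : ∀ x ∈ Kset n 1, |θ x| ≤ θ x0 := by
    intro x hx
    rw [abs_le']
    refine ⟨hmax hx, ?_⟩
    have := hmax (h.neg_mem hx)
    simpa using this
  refine ⟨θ x0, ?_, ⟨x0, hx0, rfl⟩, hb⟩
  by_contra hcon
  have hz : ∀ x ∈ Kset n 1, θ x = 0 := fun x hx => by
    have := hb x hx
    exact abs_eq_zero.1 (le_antisymm (by linarith) (abs_nonneg _))
  apply hθ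
  ext x
  -- scale x
  set M := ∑ i, |n i x| + 1 with hM
  have hMp : 0 < M := by positivity
  have := hz (M⁻¹ • x) (by
    intro i
    simp only [map_smul, smul_eq_mul, Pi.one_apply]
    rw [inv_mul_le_iff₀ hMp]
    have := Finset.single_le_sum (f := fun i => |n i x|) (fun i _ => abs_nonneg _) (Finset.mem_univ i)
    have := le_abs_self (n i x)
    linarith)
  simpa [hMp.ne'] using this

theorem isH_neg {θ : E →L[ℝ] ℝ} {H : ℝ} (hH : IsH n θ H) : IsH n (-θ) H := by
  obtain ⟨h0, ⟨x, hx, hx'⟩, hb⟩ := hH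
  exact ⟨h0, ⟨-x, h.neg_mem hx, by simp [hx']⟩, fun x hx => by simpa using hb x hx⟩

theorem isH_ne {θ : E →L[ℝ] ℝ} {H : ℝ} (hH : IsH n θ H) : θ ≠ 0 := by
  rintro rfl
  obtain ⟨h0, ⟨x, hx, hx'⟩, hb⟩ := hH
  simp at hx'
  linarith

theorem H_point {θ : E →L[ℝ] ℝ} {H : ℝ} (hH : IsH n θ H) {s : ℝ} (hs : |s| < H) :
    ∃ x, θ x = s ∧ ∀ i, n i x < 1 := by
  obtain ⟨h0, ⟨x, hx, hx'⟩, hb⟩ := hH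
  refine ⟨(s / H) • x, by simp [hx', h0.ne'], fun i => ?_⟩
  have h1 : |s / H| < 1 := by rw [abs_div, abs_of_pos h0, div_lt_one h0]; exact hs
  have h2 := h.abs_le hx i
  calc n i ((s / H) • x) ≤ |s / H * n i x| := by rw [map_smul, smul_eq_mul]; exact le_abs_self _
    _ = |s / H| * |n i x| := abs_mul _ _
    _ ≤ |s / H| * 1 := by gcongr
    _ < 1 := by linarith

theorem cut_nd1 {θ : E →L[ℝ] ℝ} {H : ℝ} (hH : IsH n θ H) {s : ℝ} (hs : |s| < H) :
    ND1 (cutn n θ) (cutc 1 s) := by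
  have key : ∀ (k : I) (t : ℝ), |t| < H → θ ≠ t • n k := by
    intro k t ht he
    obtain ⟨h0, ⟨x, hx, hx'⟩, hb⟩ := hH
    rw [he] at hx'
    have := h.abs_le hx k
    have h3 : H ≤ |t| * |n k x| := by rw [← abs_mul, ← hx']; exact le_abs_self _
    have := abs_nonneg t
    nlinarith
  refine ⟨?_, ?_⟩
  · rintro (_ | i) hi
    · exact absurd hi (h.isH_ne hH)
    · exact absurd hi (h.ne i)
  · rintro (_ | i) (_ | j) hij hi t ht
    · simp at hij
    · simp only [cutn_some, cutn_none, cutc_some, cutc_none, Pi.one_apply] at *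
      intro h1
      apply key j s hs
      rw [ht, smul_smul, mul_comm, ← h1, one_smul]
    · simp only [cutn_some, cutn_none, cutc_some, cutc_none, Pi.one_apply, mul_one] at *
      rintro rfl
      exact key i s hs ht
    · simp only [cutn_some, cutc_some] at *
      exact h.nd1.2 i j (by simpa using hij) hi t ht

theorem cut_nd2 {θ : E →L[ℝ] ℝ} {H : ℝ} (hH : IsH n θ H) :
    ∃ S : Set ℝ, S.Finite ∧ ∀ s, |s| < H → s ∉ S → ND2 (cutn n θ) (cutc 1 s) := by
  let bad : Option I × Option I × Option I → Set ℝ := fun x =>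
    {s | |s| < H ∧ x.1 ≠ x.2.1 ∧ x.1 ≠ x.2.2 ∧ x.2.1 ≠ x.2.2 ∧
      (∀ r : ℝ, cutn n θ x.2.1 ≠ r • cutn n θ x.1) ∧
      ∃ t r : ℝ, cutn n θ x.2.2 = t • cutn n θ x.2.1 + r • cutn n θ x.1 ∧
        cutc 1 s x.2.2 = t * cutc 1 s x.2.1 + r * cutc 1 s x.1}
  have uniq : ∀ (a b : E →L[ℝ] ℝ), a ≠ 0 → (∀ r : ℝ, b ≠ r • a) → ∀ t r t' r' : ℝ,
      t • b + r • a = t' • b + r' • a → t = t' ∧ r = r' := by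
    intro a b ha hb t r t' r' he
    have h1 : (t - t') • b = (r' - r) • a := by
      ext x
      have := DFunLike.congr_fun he x
      simp at this ⊢
      linarith
    by_cases htt : t - t' = 0
    · rw [htt, zero_smul] at h1
      have := (smul_eq_zero.1 h1.symm).resolve_right ha
      constructor <;> linarith
    · exfalso
      apply hb ((t - t')⁻¹ * (r' - r))
      rw [mul_smul, ← h1, smul_smul, inv_mul_cancel₀ htt, one_smul]
  have hne : ∀ o, cutn n θ o ≠ 0 := by
    rintro (_ | i)
    · exact h.isH_ne hH
    · exact h.ne i
  have hsub : ∀ x, (bad x).Subsingleton := by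
    rintro ⟨i, j, k⟩ s ⟨hs, hij, hik, hjk, hr, t, r, h1, h2⟩ s' ⟨hs', -, -, -, -, t', r', h1', h2'⟩
    obtain ⟨rfl, rfl⟩ := uniq _ _ (hne i) hr t r t' r' (h1 ▸ h1')
    simp only at h1 h2 h2' hij hik hjk
    rcases i with _ | i <;> rcases j with _ | j <;> rcases k with _ | k <;>
      simp only [ne_eq, not_true_eq_false, cutn_none, cutn_some, cutc_none, cutc_some, Pi.one_apply, mul_one,
        Option.some.injEq, reduceCtorEq, not_false_eq_true] at *
    · -- i none
      have hr0 : r ≠ 0 := by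
        rintro rfl
        exact h.nd1.2 j k hjk (h.ne j) t (by simpa using h1) (by simpa using h2)
      have : r * (s - s') = 0 := by linarith
      have := (mul_eq_zero.1 this).resolve_left hr0
      linarith
    · have hr0 : t ≠ 0 := by
        rintro rfl
        exact h.nd1.2 i k hik (h.ne i) r (by simpa using h1) (by simpa using h2)
      have : t * (s - s') = 0 := by linarith
      have := (mul_eq_zero.1 this).resolve_left hr0
      linarith
    · linarith
    · exfalso
      have : r = 1 - t := by linarith
      rw [this] at h1
      exact h.nocol hij hik hjk t h1
  refine ⟨⋃ x, bad x, finite_iUnion fun x => (hsub x).finite, fun s hs hS => ?_⟩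
  refine ND2_of (h.cut_nd1 hH hs) fun i j k hij hik hjk _ hr t r he hc => ?_
  apply hS
  rw [mem_iUnion]
  exact ⟨(i, j, k), hs, hij, hik, hjk, hr, t, r, he, hc⟩

variable [MeasurableSpace E] [BorelSpace E] (μ : Measure E) [IsAddHaarMeasure μ]

theorem cut_facet_pos {θ : E →L[ℝ] ℝ} {H : ℝ} (hH : IsH n θ H) {s : ℝ} (hs : |s| < H) :
    0 < facet μ (cutn n θ) none (cutc 1 s) := by
  obtain ⟨x, hx, hx'⟩ := h.H_point hH hs
  refine facet_pos μ (cut_bdd h.bdd θ) (h.isH_ne hH) x hx ?_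
  rintro (_ | j) hj
  · simp at hj
  · exact hx' j

theorem cut_vol_pos {θ : E →L[ℝ] ℝ} {H : ℝ} (hH : IsH n θ H) {s : ℝ} (hs : |s| < H) :
    0 < vol μ (cutn n θ) (cutc 1 s) := by
  have := abs_lt.1 hs
  obtain ⟨x, hx, hx'⟩ := h.H_point hH (s := (s - H) / 2) (by rw [abs_lt]; constructor <;> linarith)
  refine vol_pos μ (cut_bdd h.bdd θ) x ?_
  rintro (_ | j)
  · simp [hx]; linarith
  · exact hx' j

omit h in
theorem cut_add (hb : Bdd n) {θ : E →L[ℝ] ℝ} (hθ : θ ≠ 0) (c : I → ℝ) (s : ℝ) :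
    vol μ (cutn n θ) (cutc c s) + vol μ (cutn n (-θ)) (cutc c (-s)) = vol μ n c := by
  have e1 : Kset n c = Kset (cutn n θ) (cutc c s) ∪ Kset (cutn n (-θ)) (cutc c (-s)) := by
    ext x
    rw [mem_union, mem_cut, mem_cut]
    constructor
    · intro hx
      rcases le_total (θ x) s with h | h
      · exact Or.inl ⟨hx, h⟩
      · exact Or.inr ⟨hx, by simpa using h⟩
    · rintro (h | h) <;> exact h.1
  have hd : AEDisjoint μ (Kset (cutn n θ) (cutc c s)) (Kset (cutn n (-θ)) (cutc c (-s))) := by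
    refine measure_mono_null ?_ (level_null μ θ hθ s)
    intro x ⟨h1, h2⟩
    rw [mem_cut] at h1 h2
    have : s ≤ θ x := by simpa using h2.2
    exact le_antisymm h1.2 this
  simp only [vol]
  rw [e1, Measure.real, Measure.real, Measure.real, measure_union₀ (Kset_closed _ _).measurableSet.nullMeasurableSet hd,
    ENNReal.toReal_add ((cut_bdd hb _).compact _).measure_lt_top.ne ((cut_bdd hb _).compact _).measure_lt_top.ne]

end Good
end
end CSV

namespace CSV
open MeasureTheory MeasureTheory.Measure Set Filter Topology
open scoped ENNReal Pointwise
set_option linter.unusedSectionVars false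

section
variable {I : Type*} [Fintype I] [DecidableEq I] {E : Type*} [NormedAddCommGroup E] [NormedSpace ℝ E]
    [FiniteDimensional ℝ E] [MeasurableSpace E] [BorelSpace E] (μ : Measure E) [IsAddHaarMeasure μ]

theorem grad_cut (m : Option I → E →L[ℝ] ℝ) (c : Option I → ℝ) (f : I → ℝ) (r : ℝ) :
    grad μ m c (cutc f r) = grad μ m c (cutc f 0) + r * facet μ m none c := by
  simp [grad_apply, Fintype.sum_option]; ring

theorem grad_cut01 (m : Option I → E →L[ℝ] ℝ) (c : Option I → ℝ) :
    grad μ m c (cutc 0 1) = facet μ m none c := by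
  simp [grad_apply, Fintype.sum_option]

theorem cutc_split (f : I → ℝ) (r : ℝ) : cutc f r = cutc f 0 + r • cutc 0 1 := by
  ext o; cases o <;> simp

variable {n : I → E →L[ℝ] ℝ} {ι : I → I} (h : Good n ι)
include h

theorem Good.cut_step {f : I → ℝ} (hf1 : grad μ n 1 f = 0) (hf2 : hess μ n 1 f f = 0)
    {θ : E →L[ℝ] ℝ} {H : ℝ} (hH : IsH n θ H) {s : ℝ} (hs : |s| < H)
    (hA : ND2 (cutn n θ) (cutc 1 s)) (hR : ND2 (cutn n (-θ)) (cutc 1 (-s))) :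
    HasDerivAt (fun s => grad μ (cutn n θ) (cutc 1 s) (cutc f 0) / facet μ (cutn n θ) none (cutc 1 s)) 0 s := by
  have ha := h.cut_facet_pos μ hH hs
  have hvA := h.cut_vol_pos μ hH hs
  have hvR := h.cut_vol_pos μ (h.isH_neg hH) (s := -s) (by simpa using hs)
  have bA := cut_bdd h.bdd θ
  have bR := cut_bdd h.bdd (-θ)
  set a := facet μ (cutn n θ) none (cutc 1 s) with ha_def
  set Φ := grad μ (cutn n θ) (cutc 1 s) (cutc f 0) with hΦ
  set f0 := - Φ / a with hf0
  have fact0 : ∀ t : ℝ, vol μ (cutn n θ) (cutc 1 s + t • cutc f f0) +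
      vol μ (cutn n (-θ)) (cutc 1 (-s) + t • cutc f (-f0)) = vol μ n (1 + t • f) := by
    intro t
    rw [cutc_line, cutc_line, ← cut_add μ h.bdd (h.isH_ne hH) _ (s + t * f0)]
    congr 3; ring
  have fact1 : ∀ᶠ t : ℝ in 𝓝 0, grad μ (cutn n θ) (cutc 1 s + t • cutc f f0) (cutc f f0) +
      grad μ (cutn n (-θ)) (cutc 1 (-s) + t • cutc f (-f0)) (cutc f (-f0)) = grad μ n (1 + t • f) f := by
    filter_upwards [line_deriv1 μ bA hA.1 (cutc f f0), line_deriv1 μ bR hR.1 (cutc f (-f0)),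
      line_deriv1 μ h.bdd h.nd1 f] with t h1 h2 h3
    have h4 := h1.fun_add h2
    simp_rw [fact0] at h4
    exact h4.unique h3
  have g0 := fact1.self_of_nhds
  simp only [zero_smul, add_zero, hf1] at g0
  have gA : grad μ (cutn n θ) (cutc 1 s) (cutc f f0) = 0 := by
    rw [grad_cut, ← ha_def, ← hΦ, hf0]; field_simp; ring
  have gR : grad μ (cutn n (-θ)) (cutc 1 (-s)) (cutc f (-f0)) = 0 := by linarith
  have fact2 : hess μ (cutn n θ) (cutc 1 s) (cutc f f0) (cutc f f0) +
      hess μ (cutn n (-θ)) (cutc 1 (-s)) (cutc f (-f0)) (cutc f (-f0)) = 0 := by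
    have h1 := (line_deriv2 μ bA hA (cutc f f0) (cutc f f0)).fun_add
      (line_deriv2 μ bR hR (cutc f (-f0)) (cutc f (-f0)))
    have h2 := (line_deriv2 μ h.bdd h.nd2 f f).congr_of_eventuallyEq fact1
    rw [h1.unique h2, hf2]
  have lA := hess_le μ bA hA (cutc f f0)
  have lR := hess_le μ bR hR (cutc f (-f0))
  rw [gA] at lA
  rw [gR] at lR
  have kA : hess μ (cutn n θ) (cutc 1 s) (cutc f f0) (cutc f f0) = 0 := by
    by_contra hne
    rcases lt_or_gt_of_ne hne with h1 | h1
    · have : 0 < hess μ (cutn n (-θ)) (cutc 1 (-s)) (cutc f (-f0)) (cutc f (-f0)) := by linarith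
      have := mul_pos hvR this
      linarith
    · have := mul_pos hvA h1
      linarith
  have k0 := hess_ker μ bA hA hvA gA kA (cutc 0 1)
  rw [hess_symm μ bA hA, cutc_split f f0, map_add, map_smul, smul_eq_mul] at k0
  have d1 := line_deriv2 μ bA hA (cutc 0 1) (cutc f 0)
  have d2 := line_deriv2 μ bA hA (cutc 0 1) (cutc 0 1)
  simp only [cutc_line, grad_cut01, smul_zero, add_zero, mul_one] at d1 d2
  have e1 : HasDerivAt (fun u => grad μ (cutn n θ) (cutc 1 u) (cutc f 0))
      (hess μ (cutn n θ) (cutc 1 s) (cutc 0 1) (cutc f 0)) s := by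
    have := HasDerivAt.comp_sub_const (x := s) (a := s) (f := fun t => grad μ (cutn n θ) (cutc 1 (s + t)) (cutc f 0)) (by simpa using d1)
    simpa using this
  have e2 : HasDerivAt (fun u => facet μ (cutn n θ) none (cutc 1 u))
      (hess μ (cutn n θ) (cutc 1 s) (cutc 0 1) (cutc 0 1)) s := by
    have := HasDerivAt.comp_sub_const (x := s) (a := s) (f := fun t => facet μ (cutn n θ) none (cutc 1 (s + t))) (by simpa using d2)
    simpa using this
  have e3 := e1.fun_div e2 ha.ne'
  refine e3.congr_deriv ?_
  rw [div_eq_zero_iff]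
  left
  rw [← ha_def, ← hΦ]
  rw [hf0] at k0
  field_simp at k0
  linarith

theorem Good.cut_cont {θ : E →L[ℝ] ℝ} {H : ℝ} (hH : IsH n θ H) {s : ℝ} (hs : |s| < H) (o : Option I) :
    ContinuousAt (fun s => facet μ (cutn n θ) o (cutc 1 s)) s := by
  have h1 := facet_cont μ (cut_bdd h.bdd θ) (i := o) (c := cutc 1 s)
    (fun hi j hj => (h.cut_nd1 hH hs).2 o j hj.symm hi)
  refine ContinuousAt.comp (f := fun s => cutc 1 s) h1 (Continuous.continuousAt ?_)
  refine continuous_pi fun o => ?_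
  cases o
  · exact continuous_id
  · exact continuous_const

theorem Good.cut_const {f : I → ℝ} (hf1 : grad μ n 1 f = 0) (hf2 : hess μ n 1 f f = 0)
    {θ : E →L[ℝ] ℝ} {H : ℝ} (hH : IsH n θ H) :
    ∃ b : ℝ, ∀ s, |s| < H → grad μ (cutn n θ) (cutc 1 s) (cutc f 0) =
      - b * facet μ (cutn n θ) none (cutc 1 s) := by
  set r : ℝ → ℝ := fun s => grad μ (cutn n θ) (cutc 1 s) (cutc f 0) / facet μ (cutn n θ) none (cutc 1 s)
  obtain ⟨S, hS, hS'⟩ := h.cut_nd2 hH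
  obtain ⟨T, hT, hT'⟩ := h.cut_nd2 (h.isH_neg hH)
  have hrc : ∀ s, |s| < H → ContinuousAt r s := by
    intro s hs
    refine ContinuousAt.div ?_ (h.cut_cont μ hH hs _) (h.cut_facet_pos μ hH hs).ne'
    simp_rw [grad_apply]
    exact tendsto_finsetSum _ fun o _ => (h.cut_cont μ hH hs o).mul continuousAt_const
  have hconst : ∀ s, |s| < H → r s = r 0 := by
    intro s hs
    have hsub : ∀ x ∈ uIcc 0 s, |x| < H := by
      intro x hx
      rw [abs_lt] at *
      rw [mem_uIcc] at hx
      have := hH.1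
      rcases hx with hx | hx <;> constructor <;> linarith
    have := integral_eq_of_hasDerivAt_off_countable r (fun _ => (0:ℝ)) (a := 0) (b := s) (s := S ∪ (Neg.neg '' T))
      (hS.countable.union (hT.countable.image _)) (fun x hx => (hrc x (hsub x hx)).continuousWithinAt) (by
        intro x hx
        have hx1 := hsub x (Ioo_subset_Icc_self hx.1)
        have hx2 := hx.2
        rw [mem_union, not_or] at hx2
        exact h.cut_step μ hf1 hf2 hH hx1 (hS' x hx1 hx2.1) (hT' (-x) (by simpa using hx1)
          fun hh => hx2.2 ⟨-x, hh, by simp⟩)) (by simp)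
    simp at this
    linarith
  refine ⟨- r 0, fun s hs => ?_⟩
  rw [← hconst s hs, neg_neg, div_mul_cancel₀ _ (h.cut_facet_pos μ hH hs).ne']
end
end CSV

namespace CSV
open MeasureTheory MeasureTheory.Measure Set Filter Topology
open scoped ENNReal Pointwise
set_option linter.unusedSectionVars false

section
variable {I : Type*} [Fintype I] [DecidableEq I] {E : Type*} [NormedAddCommGroup E] [NormedSpace ℝ E]
    [FiniteDimensional ℝ E] [MeasurableSpace E] [BorelSpace E] (μ : Measure E) [IsAddHaarMeasure μ]

theorem cut_integral {n : I → E →L[ℝ] ℝ} (hb : Bdd n) (θ : E →L[ℝ] ℝ) (c : I → ℝ) {N : ℝ} (hN0 : 0 ≤ N)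
    (hN : ∀ x ∈ Kset n c, |θ x| ≤ N) :
    ∫ s in (-N)..N, vol μ (cutn n θ) (cutc c s) = N * vol μ n c - ∫ x in Kset n c, θ x ∂μ := by
  have hK := hb.compact c
  have hfin : IsFiniteMeasure (μ.restrict (Kset n c)) := ⟨by simpa using hK.measure_lt_top⟩
  have hm : MeasurableSet (Kset n c) := hK.measurableSet
  let F : ℝ → E → ℝ := fun s x => {y | θ y ≤ s}.indicator 1 x
  have e1 : ∀ s, vol μ (cutn n θ) (cutc c s) = ∫ x in Kset n c, F s x ∂μ := by
    intro s
    have hms : MeasurableSet {y | θ y ≤ s} := measurableSet_le θ.continuous.measurable measurable_const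
    simp only [F]
    rw [integral_indicator_one hms, measureReal_restrict_apply hms, vol]
    congr 1
    ext x
    rw [mem_cut, mem_inter_iff, and_comm]; rfl
  have e2 : ∀ x ∈ Kset n c, ∫ s in Ioc (-N) N, F s x = N - θ x := by
    intro x hx
    have h1 := abs_le.1 (hN x hx)
    have : (fun s => F s x) = (Ici (θ x)).indicator 1 := by
      ext s; simp [F, indicator]
    rw [this, integral_indicator_one measurableSet_Ici, measureReal_restrict_apply measurableSet_Ici,
      measureReal_def, ← Real.volume_real_Icc_of_le (a := θ x) (b := N) h1.2, measureReal_def]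
    congr 1
    apply measure_congr
    have h3 : (Ici (θ x) ∩ Ioc (-N) N : Set ℝ) ⊆ Icc (θ x) N := fun s hs => ⟨hs.1, hs.2.2⟩
    refine (HasSubset.Subset.eventuallyLE h3).antisymm ?_
    rw [ae_le_set]
    refine measure_mono_null (t := {θ x}) ?_ (by simp)
    rintro s ⟨⟨h4, h5⟩, h6⟩
    by_contra h7
    apply h6
    have : θ x < s := lt_of_le_of_ne h4 fun h => h7 h.symm
    exact ⟨h4, by linarith, h5⟩
  rw [intervalIntegral.integral_of_le (by linarith)]
  simp_rw [e1]
  rw [integral_integral_swap]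
  · rw [setIntegral_congr_fun hm e2, integral_sub (integrable_const _)
      (θ.continuous.continuousOn.integrableOn_compact hK)]
    simp [vol, mul_comm]
  · have : IsFiniteMeasure (volume.restrict (Ioc (-N) N)) := ⟨by simp⟩
    refine Integrable.of_bound (C := 1) ?_ ?_
    · apply Measurable.aestronglyMeasurable
      have : Function.uncurry F = {y : ℝ × E | θ y.2 ≤ y.1}.indicator 1 := by
        ext ⟨s, x⟩; simp [F, indicator, Function.uncurry]
      rw [this]
      exact measurable_one.indicator (measurableSet_le (θ.continuous.measurable.comp measurable_snd) measurable_fst)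
    · refine ae_of_all _ fun ⟨s, x⟩ => ?_
      simp only [Function.uncurry, F, indicator]
      split_ifs <;> simp

theorem vol_mono {n : I → E →L[ℝ] ℝ} (hb : Bdd n) {c c' : I → ℝ} (hc : c ≤ c') : vol μ n c ≤ vol μ n c' := by
  apply measureReal_mono
  · exact fun x hx i => (hx i).trans (hc i)
  · exact (hb.compact _).measure_lt_top.ne

theorem cut_mono {n : I → E →L[ℝ] ℝ} (hb : Bdd n) (θ : E →L[ℝ] ℝ) {c c' : I → ℝ} (hc : c ≤ c') (s : ℝ) :
    vol μ (cutn n θ) (cutc c s) ≤ vol μ (cutn n θ) (cutc c' s) := by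
  apply vol_mono μ (cut_bdd hb θ)
  rintro (_ | i)
  · exact le_rfl
  · exact hc i

theorem cut_diff {n : I → E →L[ℝ] ℝ} (hb : Bdd n) {θ : E →L[ℝ] ℝ} (hθ : θ ≠ 0) {c c' : I → ℝ} (hc : c ≤ c') (s : ℝ) :
    vol μ (cutn n θ) (cutc c' s) - vol μ (cutn n θ) (cutc c s) ≤ vol μ n c' - vol μ n c := by
  have h1 := cut_mono μ hb (-θ) hc (-s)
  have h2 := Good.cut_add μ hb hθ c s
  have h3 := Good.cut_add μ hb hθ c' s
  linarith

theorem cutc_cont (c : I → ℝ) : Continuous (fun s : ℝ => cutc c s) := by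
  refine continuous_pi fun o => ?_
  cases o
  · exact continuous_id
  · exact continuous_const

variable {n : I → E →L[ℝ] ℝ} {ι : I → I} (h : Good n ι)
include h

theorem Good.cutvol_cont {θ : E →L[ℝ] ℝ} (hθ : θ ≠ 0) (c : I → ℝ) :
    Continuous (fun s => vol μ (cutn n θ) (cutc c s)) := by
  rw [continuous_iff_continuousAt]
  intro s
  refine ContinuousAt.comp (f := fun s => cutc c s) (vol_cont μ (cut_bdd h.bdd θ) _ ?_) (cutc_cont c).continuousAt
  rintro (_ | i) h0
  · exact absurd h0 hθ
  · exact absurd h0 (h.ne i)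

theorem Good.a_integral {θ : E →L[ℝ] ℝ} {H : ℝ} (hH : IsH n θ H) :
    ∫ s in (-H)..H, facet μ (cutn n θ) none (cutc 1 s) = vol μ n 1 := by
  have hc := h.cutvol_cont μ (h.isH_ne hH) 1
  have hd : ∀ s ∈ Ioo (-H) H, HasDerivAt (fun s => vol μ (cutn n θ) (cutc 1 s)) (facet μ (cutn n θ) none (cutc 1 s)) s := by
    intro s hs
    have hs' : |s| < H := abs_lt.2 hs
    have := (h.cut_nd1 hH hs').2
    have h1 := partial_deriv μ (cut_bdd h.bdd θ) (i := none) (c := cutc 1 s) (fun h0 => absurd h0 (h.isH_ne hH))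
      (fun hi j hj => this none j hj.symm hi)
    have h2 : ∀ t, Function.update (cutc 1 s) (none : Option I) t = cutc 1 t := by
      intro t; ext o; cases o <;> simp
    simp_rw [h2] at h1
    exact h1
  have hH0 := hH.1
  rw [intervalIntegral.integral_eq_sub_of_hasDerivAt_of_le (by linarith) hc.continuousOn hd]
  · have h1 : vol μ (cutn n θ) (cutc 1 H) = vol μ n 1 := by
      unfold vol; congr 1; ext x
      rw [mem_cut]
      exact ⟨fun h => h.1, fun h => ⟨h, (le_abs_self _).trans (hH.2.2 x h)⟩⟩
    have h2 : vol μ (cutn n θ) (cutc 1 (-H)) = 0 := by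
      rw [vol, measureReal_def, measure_mono_null _ (level_null μ θ (h.isH_ne hH) (-H))]
      · rfl
      · intro x hx
        rw [mem_cut] at hx
        have := _root_.abs_le.1 (hH.2.2 x hx.1)
        exact le_antisymm hx.2 this.1
    rw [h1, h2, sub_zero]
  · rw [intervalIntegrable_iff_integrableOn_Ioc_of_le (by linarith)]
    exact intervalIntegral.integrableOn_deriv_of_nonneg hc.continuousOn hd fun s _ => facet_nonneg μ _ _ _

theorem Good.eventually_bd (f : I → ℝ) {θ : E →L[ℝ] ℝ} {H : ℝ} (hH : IsH n θ H) {ε : ℝ} (hε : 0 < ε) :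
    ∀ᶠ t : ℝ in 𝓝 0, ∀ x ∈ Kset n (1 + t • f), |θ x| ≤ (1 + ε) * H := by
  have : ∀ᶠ t : ℝ in 𝓝 0, ∀ i, t * f i < ε := by
    rw [eventually_all]; intro i
    have : Tendsto (fun t : ℝ => t * f i) (𝓝 0) (𝓝 (0 * f i)) := (continuous_mul_const (f i)).tendsto 0
    rw [zero_mul] at this
    exact this.eventually_lt_const hε
  filter_upwards [this] with t ht x hx
  have h1 : (1 + ε)⁻¹ • x ∈ Kset n 1 := by
    intro i
    have := hx i
    have := ht i
    simp at *
    rw [inv_mul_le_iff₀ (by linarith)]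
    linarith
  have := hH.2.2 _ h1
  rw [map_smul, smul_eq_mul, abs_mul, abs_of_pos (by positivity), inv_mul_le_iff₀ (by linarith)] at this
  exact this
end
end CSV

namespace CSV
open MeasureTheory MeasureTheory.Measure Set Filter Topology
open scoped ENNReal Pointwise
set_option linter.unusedSectionVars false

section
variable {I : Type*} [Fintype I] [DecidableEq I] {E : Type*} [NormedAddCommGroup E] [NormedSpace ℝ E]
    [FiniteDimensional ℝ E] [MeasurableSpace E] [BorelSpace E] (μ : Measure E) [IsAddHaarMeasure μ]

theorem vol_slope {n : I → E →L[ℝ] ℝ} (hb : Bdd n) {c : I → ℝ} (hc : ND1 n c) (f : I → ℝ) :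
    Tendsto (fun t : ℝ => t⁻¹ * (vol μ n (c + t • f) - vol μ n c)) (𝓝[≠] 0) (𝓝 (grad μ n c f)) := by
  have := (line_deriv1 μ hb hc f).self_of_nhds
  rw [hasDerivAt_iff_tendsto_slope_zero] at this
  simpa using this

variable {n : I → E →L[ℝ] ℝ} {ι : I → I} (h : Good n ι)
include h

theorem Good.slope_bound (f : I → ℝ) {θ : E →L[ℝ] ℝ} (hθ : θ ≠ 0) :
    ∃ C : ℝ, ∀ᶠ t : ℝ in 𝓝[≠] 0, ∀ s,
      |t⁻¹ * (vol μ (cutn n θ) (cutc (1 + t • f) s) - vol μ (cutn n θ) (cutc 1 s))| ≤ C := by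
  let g : ℝ → ℝ := fun r => vol μ n (1 + r • |f|)
  have hg : HasDerivAt g _ 0 := (line_deriv1 μ h.bdd h.nd1 |f|).self_of_nhds
  have hO := hg.differentiableAt.isBigO_sub
  obtain ⟨C, hC⟩ := hO.bound
  refine ⟨2 * C, ?_⟩
  have t1 : Tendsto (fun t : ℝ => |t|) (𝓝[≠] 0) (𝓝 0) := by
    have : Tendsto (fun t : ℝ => |t|) (𝓝 0) (𝓝 |0|) := continuous_abs.tendsto 0
    rw [abs_zero] at this
    exact this.mono_left nhdsWithin_le_nhds
  have t2 : Tendsto (fun t : ℝ => -|t|) (𝓝[≠] 0) (𝓝 0) := by simpa using t1.neg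
  filter_upwards [t1.eventually hC, t2.eventually hC, self_mem_nhdsWithin] with t h1 h2 ht s
  have ht' : t ≠ 0 := ht
  have htp : 0 < |t| := abs_pos.2 ht'
  simp only [sub_zero, Real.norm_eq_abs, abs_neg, abs_abs] at h1 h2
  have hcc : ∀ i, |t * f i| = |t| * |f i| := fun i => abs_mul _ _
  have o1 : (1 + (-|t|) • |f| : I → ℝ) ≤ 1 + t • f := fun i => by
    have := neg_abs_le (t * f i)
    rw [hcc] at this
    simp; linarith
  have o2 : (1 + t • f : I → ℝ) ≤ 1 + |t| • |f| := fun i => by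
    have := le_abs_self (t * f i)
    rw [hcc] at this
    simp; linarith
  have o3 : (1 + (-|t|) • |f| : I → ℝ) ≤ 1 := fun i => by
    have : 0 ≤ |t| * |f i| := by positivity
    simp; linarith
  have o4 : (1 : I → ℝ) ≤ 1 + |t| • |f| := fun i => by
    have : 0 ≤ |t| * |f i| := by positivity
    simp; linarith
  have p1 := cut_mono μ h.bdd θ o1 s
  have p2 := cut_mono μ h.bdd θ o2 s
  have p3 := cut_mono μ h.bdd θ o3 s
  have p4 := cut_mono μ h.bdd θ o4 s
  have p5 := cut_diff μ h.bdd hθ (o1.trans o2) s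
  have q1 := le_abs_self (g |t| - g 0)
  have q2 := neg_abs_le (g (-|t|) - g 0)
  have q3 : vol μ n (1 + |t| • |f|) - vol μ n (1 + (-|t|) • |f|) = g |t| - g (-|t|) := rfl
  rw [abs_mul, abs_inv, inv_mul_le_iff₀ htp, _root_.abs_le]
  constructor <;> linarith

theorem Good.J_slope {f : I → ℝ} (hf1 : grad μ n 1 f = 0)
    {θ : E →L[ℝ] ℝ} {H : ℝ} (hH : IsH n θ H) {b : ℝ}
    (hb : ∀ s, |s| < H → grad μ (cutn n θ) (cutc 1 s) (cutc f 0) =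
      - b * facet μ (cutn n θ) none (cutc 1 s)) :
    Tendsto (fun t : ℝ => t⁻¹ * ((∫ x in Kset n (1 + t • f), θ x ∂μ) - ∫ x in Kset n 1, θ x ∂μ)) (𝓝[≠] 0)
      (𝓝 (b * vol μ n 1)) := by
  have hθ := h.isH_ne hH
  have hH0 := hH.1
  obtain ⟨C, hC⟩ := h.slope_bound μ f hθ
  set N := (1 + 1) * H with hN
  set L : ℝ → ℝ := (Ioo (-H) H).indicator (fun s => - b * facet μ (cutn n θ) none (cutc 1 s)) with hL
  have slope1 := vol_slope μ h.bdd h.nd1 f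
  rw [hf1] at slope1
  have main : Tendsto (fun t : ℝ => ∫ s in (-N)..N,
      t⁻¹ * (vol μ (cutn n θ) (cutc (1 + t • f) s) - vol μ (cutn n θ) (cutc 1 s))) (𝓝[≠] 0)
      (𝓝 (∫ s in (-N)..N, L s)) := by
    refine intervalIntegral.tendsto_integral_filter_of_dominated_convergence (fun _ => C) ?_ ?_ (by simp) ?_
    · refine Eventually.of_forall fun t => Continuous.aestronglyMeasurable ?_
      exact continuous_const.mul ((h.cutvol_cont μ hθ _).sub (h.cutvol_cont μ hθ _))
    · filter_upwards [hC] with t ht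
      exact ae_of_all _ fun s _ => ht s
    · have hnull : ∀ᵐ s : ℝ, s ∉ ({H, -H} : Set ℝ) := by
        rw [ae_iff]; simp only [not_not]
        exact ((Set.finite_singleton _).insert _).measure_zero _
      filter_upwards [hnull] with s hs _
      simp only [mem_insert_iff, mem_singleton_iff, not_or] at hs
      rcases lt_or_ge |s| H with h1 | h1
      · have := vol_slope μ (cut_bdd h.bdd θ) (h.cut_nd1 hH h1) (cutc f 0)
        rw [hb s h1] at this
        simp only [cutc_line, mul_zero, add_zero] at this
        rw [hL, indicator_of_mem (show s ∈ Ioo (-H) H from abs_lt.1 h1)]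
        exact this
      · rw [hL, indicator_of_notMem (fun h2 : s ∈ Ioo (-H) H => absurd (abs_lt.2 h2) (not_lt.2 h1))]
        have h1' : H < |s| := by
          refine lt_of_le_of_ne h1 fun h2 => ?_
          rcases abs_choice s with h3 | h3
          · exact hs.1 (by linarith)
          · exact hs.2 (by linarith)
        have hε : 0 < |s| / H - 1 := by
          rw [sub_pos, one_lt_div hH0]; exact h1'
        have hε2 : (1 + (|s| / H - 1) / 2) * H < |s| := by
          have : |s| / H * H = |s| := div_mul_cancel₀ _ hH0.ne'
          nlinarith
        have ev := h.eventually_bd f hH (half_pos hε)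
        have ev0 := ev.self_of_nhds
        simp only [zero_smul, add_zero] at ev0
        rcases le_or_gt 0 s with h3 | h3
        · rw [abs_of_nonneg h3] at *
          have full : ∀ c, (∀ x ∈ Kset n c, |θ x| ≤ (1 + (s / H - 1) / 2) * H) →
              vol μ (cutn n θ) (cutc c s) = vol μ n c := by
            intro c hc
            unfold vol; congr 1; ext x
            rw [mem_cut]
            exact ⟨fun h => h.1, fun h => ⟨h, by linarith [le_abs_self (θ x), hc x h]⟩⟩
          refine slope1.congr' ?_
          filter_upwards [nhdsWithin_le_nhds ev] with t ht
          rw [full _ ht, full _ ev0]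
        · rw [abs_of_neg h3] at *
          have full : ∀ c, (∀ x ∈ Kset n c, |θ x| ≤ (1 + (-s / H - 1) / 2) * H) →
              vol μ (cutn n θ) (cutc c s) = 0 := by
            intro c hc
            have : Kset (cutn n θ) (cutc c s) = ∅ := by
              ext x
              rw [mem_cut]
              simp only [mem_empty_iff_false, iff_false, not_and, not_le]
              intro hx
              linarith [neg_abs_le (θ x), hc x hx]
            rw [vol, this, measureReal_empty]
          refine tendsto_const_nhds.congr' ?_
          filter_upwards [nhdsWithin_le_nhds ev] with t ht
          rw [full _ ht, full _ ev0]; simp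
  have hLint : ∫ s in (-N)..N, L s = - b * vol μ n 1 := by
    rw [intervalIntegral.integral_of_le (by linarith), hL, setIntegral_indicator measurableSet_Ioo,
      inter_eq_right.2, ← integral_Ioc_eq_integral_Ioo, ← intervalIntegral.integral_of_le (by linarith),
      intervalIntegral.integral_const_mul, h.a_integral μ hH]
    intro s hs
    exact ⟨by linarith [hs.1], by linarith [hs.2]⟩
  rw [hLint] at main
  have h2 := (slope1.const_mul N).sub main
  have e : N * 0 - -b * vol μ n 1 = b * vol μ n 1 := by ring
  rw [e] at h2
  refine h2.congr' ?_
  have ev := h.eventually_bd f hH one_pos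
  have ev0 := ev.self_of_nhds
  simp only [zero_smul, add_zero] at ev0
  filter_upwards [nhdsWithin_le_nhds ev] with t ht
  rw [intervalIntegral.integral_const_mul, intervalIntegral.integral_sub
    ((h.cutvol_cont μ hθ _).intervalIntegrable _ _) ((h.cutvol_cont μ hθ _).intervalIntegrable _ _),
    cut_integral μ h.bdd θ _ (by linarith) ht, cut_integral μ h.bdd θ _ (by linarith) ev0]
  ring

theorem Good.exists_b {f : I → ℝ} (hf1 : grad μ n 1 f = 0) (hf2 : hess μ n 1 f f = 0) (θ : E →L[ℝ] ℝ) :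
    ∃ b : ℝ, Tendsto (fun t : ℝ => t⁻¹ * ((∫ x in Kset n (1 + t • f), θ x ∂μ) - ∫ x in Kset n 1, θ x ∂μ)) (𝓝[≠] 0)
      (𝓝 (b * vol μ n 1)) ∧ ∀ H, IsH n θ H → ∀ s, |s| < H → grad μ (cutn n θ) (cutc 1 s) (cutc f 0) =
      - b * facet μ (cutn n θ) none (cutc 1 s) := by
  by_cases hθ : θ = 0
  · subst hθ
    exact ⟨0, by simp, fun H hH => absurd rfl (h.isH_ne hH)⟩
  · obtain ⟨H, hH⟩ := h.exists_H hθ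
    obtain ⟨b, hb⟩ := h.cut_const μ hf1 hf2 hH
    refine ⟨b, h.J_slope μ hf1 hH hb, fun H' hH' => ?_⟩
    have : H' = H := by
      obtain ⟨_, ⟨x, hx, hx'⟩, h3⟩ := hH
      obtain ⟨_, ⟨y, hy, hy'⟩, h4⟩ := hH'
      have := h3 y hy
      have := h4 x hx
      have := le_abs_self (θ x)
      have := le_abs_self (θ y)
      linarith
    rw [this]; exact hb

theorem Good.exists_blin {f : I → ℝ} (hf1 : grad μ n 1 f = 0) (hf2 : hess μ n 1 f f = 0) :
    ∃ b : (E →L[ℝ] ℝ) →ₗ[ℝ] ℝ, ∀ θ H, IsH n θ H → ∀ s, |s| < H → grad μ (cutn n θ) (cutc 1 s) (cutc f 0) =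
      - b θ * facet μ (cutn n θ) none (cutc 1 s) := by
  choose b hb hb' using h.exists_b μ hf1 hf2
  have hv : vol μ n 1 ≠ 0 := (vol_pos μ h.bdd 0 (by simp)).ne'
  have hIntg : ∀ (θ : E →L[ℝ] ℝ) c, IntegrableOn θ (Kset n c) μ := fun θ c =>
    θ.continuous.continuousOn.integrableOn_compact (h.bdd.compact c)
  refine ⟨⟨⟨b, fun θ θ' => ?_⟩, fun r θ => ?_⟩, hb'⟩
  · have h1 := (hb θ).add (hb θ')
    have h2 := hb (θ + θ')
    have := tendsto_nhds_unique h2 (h1.congr fun t => by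
      simp only [ContinuousLinearMap.add_apply]
      rw [integral_add (hIntg θ _) (hIntg θ' _), integral_add (hIntg θ _) (hIntg θ' _)]; ring)
    rw [← add_mul] at this
    exact mul_right_cancel₀ hv this
  · have h1 := (hb θ).const_mul r
    have h2 := hb (r • θ)
    have := tendsto_nhds_unique h2 (h1.congr fun t => by
      simp only [ContinuousLinearMap.smul_apply, smul_eq_mul, integral_const_mul]
      ring)
    rw [← mul_assoc] at this
    exact mul_right_cancel₀ hv this
end
end CSV

namespace CSV
open MeasureTheory MeasureTheory.Measure Set Filter Topology
open scoped ENNReal Pointwise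
set_option linter.unusedSectionVars false

section
variable {I : Type*} [Fintype I] [DecidableEq I] {E : Type*} [NormedAddCommGroup E] [NormedSpace ℝ E]
    [FiniteDimensional ℝ E] [MeasurableSpace E] [BorelSpace E] (μ : Measure E) [IsAddHaarMeasure μ]

theorem mem_sec (n : I → E →L[ℝ] ℝ) (i : I) (c : I → ℝ) (s : ℝ) (z : (n i).ker) :
    z ∈ Kset (resN n (n i)) (lev n i c s) ↔ ∀ j, j ≠ i → n j (z : E) ≤ c j - n j (sliceU (n i)) * s := by
  constructor
  · intro hz j hj
    have := hz j
    simpa [lev, hj, resN] using this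
  · intro hz j
    by_cases hj : j = i
    · subst hj
      have hz : n j (z : E) = 0 := z.2
      simp [lev, resN, hz]
    · simpa [lev, hj, resN] using hz j hj

variable {n : I → E →L[ℝ] ℝ} {ι : I → I} (h : Good n ι)
include h

theorem Good.isH_self (i : I) : IsH n (n i) 1 := by
  obtain ⟨x, hx, hx'⟩ := h.expo i
  refine ⟨one_pos, ⟨x, fun j => ?_, hx⟩, fun y hy => h.abs_le hy i⟩
  by_cases hj : j = i
  · subst hj; exact hx.le
  · exact (hx' j hj).le

theorem Good.strict {f : I → ℝ} (hf1 : grad μ n 1 f = 0) (hf2 : hess μ n 1 f f = 0) :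
    ∃ b : (E →L[ℝ] ℝ) →ₗ[ℝ] ℝ, ∀ i, f i = b (n i) := by
  obtain ⟨b, hb⟩ := h.exists_blin μ hf1 hf2
  refine ⟨b, fun i => ?_⟩
  have hH := h.isH_self i
  have hbi := hb (n i) 1 hH
  have hvi : 0 < facet μ n i 1 := by
    obtain ⟨x, hx, hx'⟩ := h.expo i
    exact facet_pos μ h.bdd (h.ne i) x hx hx'
  have z1 : ∀ s < 1, facet μ (cutn n (n i)) (some i) (cutc 1 s) = 0 := by
    intro s hs
    rw [facet, if_neg (by exact h.ne i)]
    have : Kset (resN (cutn n (n i)) (cutn n (n i) (some i)))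
      (lev (cutn n (n i)) (some i) (cutc 1 s) (cutc 1 s (some i))) = ∅ := by
      ext z
      rw [mem_sec]
      simp only [mem_empty_iff_false, iff_false, not_forall, not_le]
      refine ⟨none, by simp, ?_⟩
      have hz : n i (z : E) = 0 := z.2
      simp [hz, sliceU_spec (h.ne i), hs]
    rw [vol, this, measureReal_empty, mul_zero]
  have z2 : ∀ k, k ≠ i → Tendsto (fun s => facet μ (cutn n (n i)) (some k) (cutc 1 s)) (𝓝[<] 1) (𝓝 (facet μ n k 1)) := by
    intro k hk
    have h1 := facet_cont μ (cut_bdd h.bdd (n i)) (i := some k) (c := cutc 1 1) (by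
      rintro - (_ | j) hj t ht
      · simp at ht ⊢
        rintro rfl
        exact h.inj hk.symm (by simpa using ht)
      · exact h.nd1.2 k j (by simpa using hj.symm) (h.ne k) t ht)
    have h2 : ContinuousAt (fun s => facet μ (cutn n (n i)) (some k) (cutc 1 s)) 1 :=
      ContinuousAt.comp (f := fun s => cutc 1 s) h1 (cutc_cont 1).continuousAt
    have h3 : facet μ (cutn n (n i)) (some k) (cutc 1 1) = facet μ n k 1 := by
      rw [facet, if_neg (by exact h.ne k), facet, if_neg (h.ne k)]
      congr 1
      unfold vol
      congr 1
      ext z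
      refine (mem_sec _ _ _ _ _).trans (Iff.trans ?_ (mem_sec _ _ _ _ _).symm)
      constructor
      · intro hz j hj
        exact hz (some j) (by simpa using hj)
      · rintro hz (_ | j) hj
        · exact hz i hk.symm
        · exact hz j (by simpa using hj)
    have := h2.tendsto
    rw [h3] at this
    exact this.mono_left nhdsWithin_le_nhds
  have z3 : Tendsto (fun s => facet μ (cutn n (n i)) none (cutc 1 s)) (𝓝[<] 1) (𝓝 (facet μ n i 1)) := by
    have h1 := vol_cont addHaar (h.bdd.res (n i)) (lev n i 1 1) (lev_ne (c := 1) (h.ne i) fun j hj => h.nd1.2 i j hj.symm (h.ne i))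
    have h2 : ContinuousAt (fun s => lev n i 1 s) 1 :=
        ((lev_continuous n i).comp (by fun_prop : Continuous fun s : ℝ => ((1 : I → ℝ), s))).continuousAt
    have h3 : ContinuousAt (fun s => vol addHaar (resN n (n i)) (lev n i 1 s)) 1 :=
      ContinuousAt.comp (f := fun s => lev n i 1 s) h1 h2
    have h4 := (h3.tendsto.mono_left (nhdsWithin_le_nhds (s := Iio 1))).const_mul (sliceK μ (n i))
    rw [facet, if_neg (h.ne i)]
    refine h4.congr' ?_
    filter_upwards [self_mem_nhdsWithin] with s hs
    have hs' : s < 1 := hs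
    rw [facet, if_neg (by exact h.ne i)]
    congr 1
    unfold vol
    congr 1
    ext z
    have hz : n i (z : E) = 0 := z.2
    refine (mem_sec _ _ _ _ _).trans (Iff.trans ?_ (mem_sec _ _ _ _ _).symm)
    constructor
    · rintro hz' (_ | j) hj
      · simp at hj
      · by_cases hj : j = i
        · subst hj
          have : n j z ≤ 1 - n j (sliceU (n j)) * s := by simp [hz, sliceU_spec (h.ne j), hs'.le]
          exact this
        · exact hz' j hj
    · intro hz' j hj
      exact hz' (some j) (by simp)
  have l1 : Tendsto (fun s => grad μ (cutn n (n i)) (cutc 1 s) (cutc f 0)) (𝓝[<] 1) (𝓝 (- (f i * facet μ n i 1))) := by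
    have : - (f i * facet μ n i 1) = ∑ k, if k = i then 0 else facet μ n k 1 * f k := by
      rw [grad_apply] at hf1
      have e : ∀ k, (if k = i then 0 else facet μ n k 1 * f k) = facet μ n k 1 * f k -
        if k = i then facet μ n k 1 * f k else 0 := by intro k; split_ifs <;> simp
      simp_rw [e]
      rw [Finset.sum_sub_distrib, hf1]; simp [mul_comm]
    rw [this]
    simp only [grad_apply, Fintype.sum_option, cutc_none, mul_zero, zero_add, cutc_some]
    refine tendsto_finsetSum _ fun k _ => ?_
    split_ifs with hk
    · subst hk
      refine tendsto_const_nhds.congr' ?_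
      filter_upwards [self_mem_nhdsWithin] with s hs
      rw [z1 s hs, zero_mul]
    · exact (z2 k hk).mul_const _
  have l2 := z3.const_mul (- b (n i))
  have l3 := tendsto_nhds_unique l1 (l2.congr' (by
    filter_upwards [Ioo_mem_nhdsLT (show (0:ℝ) < 1 by norm_num)] with s hs
    rw [hbi s (abs_lt.2 ⟨by linarith [hs.1], hs.2⟩)]))
  have : f i * facet μ n i 1 = b (n i) * facet μ n i 1 := by linarith
  exact mul_right_cancel₀ hvi.ne' this
end
end CSV

namespace CSV
open MeasureTheory MeasureTheory.Measure Set Filter Topology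
open scoped ENNReal Pointwise
set_option linter.unusedSectionVars false

section
variable {I : Type*} [Fintype I] [DecidableEq I] {E : Type*} [NormedAddCommGroup E] [NormedSpace ℝ E]
    [FiniteDimensional ℝ E] [MeasurableSpace E] [BorelSpace E] (μ : Measure E) [IsAddHaarMeasure μ]

theorem vol_translate (n : I → E →L[ℝ] ℝ) (c : I → ℝ) (x : E) :
    vol μ n (c + fun i => n i x) = vol μ n c := by
  have : Kset n (c + fun i => n i x) = (fun y => y + (-x)) ⁻¹' Kset n c := by
    ext y; simp [Kset]
  rw [vol, vol, measureReal_def, measureReal_def, this, measure_preimage_add_right]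

theorem vol_smul (n : I → E →L[ℝ] ℝ) (c : I → ℝ) {r : ℝ} (hr : 0 < r) :
    vol μ n (r • c) = r ^ (Module.finrank ℝ E) * vol μ n c := by
  have : Kset n (r • c) = r • Kset n c := by
    ext y
    rw [mem_smul_set_iff_inv_smul_mem₀ hr.ne']
    simp only [Kset, mem_ofPred_eq, Pi.smul_apply, smul_eq_mul, map_smul]
    refine forall_congr' fun i => ?_
    rw [inv_mul_le_iff₀ hr]
  rw [vol, vol, this, measureReal_def, addHaar_smul, ENNReal.toReal_mul, ENNReal.toReal_ofReal (abs_nonneg _),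
    abs_of_pos (by positivity), measureReal_def]

theorem hess_translate {n : I → E →L[ℝ] ℝ} (hb : Bdd n) {c : I → ℝ} (hc : ND2 n c) (x : E) (g : I → ℝ) :
    hess μ n c (fun i => n i x) g = 0 := by
  have h1 := line_deriv2 μ hb hc (fun i => n i x) g
  have hl : Continuous fun t : ℝ => c + t • (fun i => n i x) := by fun_prop
  have ev : ∀ᶠ t : ℝ in 𝓝 0, ND1 n (c + t • (fun i => n i x)) := by
    have h1 := hl.tendsto 0
    simp only [zero_smul, add_zero] at h1
    exact h1.eventually hc.1.eventually
  have ev2 : (fun t : ℝ => grad μ n (c + t • (fun i => n i x)) g) =ᶠ[𝓝 0] fun _ => grad μ n c g := by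
    filter_upwards [ev] with t ht
    have h2 := vol_hasFDerivAt μ hb ht
    have h3 : HasFDerivAt (fun c' : I → ℝ => vol μ n (c' + t • (fun i => n i x)))
      (grad μ n (c + t • (fun i => n i x))) c := by
      have := h2.comp c ((hasFDerivAt_id c).add_const (t • (fun i => n i x)))
      rw [ContinuousLinearMap.comp_id] at this
      exact this
    have h4 : (fun c' : I → ℝ => vol μ n (c' + t • (fun i => n i x))) = vol μ n := by
      ext c'
      have := vol_translate μ n c' (t • x)
      have e : (fun i => n i (t • x)) = t • (fun i => n i x) := by ext; simp
      rwa [e] at this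
    rw [h4] at h3
    rw [h3.unique (vol_hasFDerivAt μ hb hc.1)]
  exact h1.unique ((hasDerivAt_const _ _).congr_of_eventuallyEq ev2)

theorem hess_homog {n : I → E →L[ℝ] ℝ} (hb : Bdd n) {c : I → ℝ} (hc : ND2 n c) (g : I → ℝ)
    (hd : 1 ≤ Module.finrank ℝ E) :
    hess μ n c c g = ((Module.finrank ℝ E : ℝ) - 1) * grad μ n c g := by
  have h1 := line_deriv2 μ hb hc c g
  have hl : Continuous fun t : ℝ => c + t • c := by fun_prop
  have ev : ∀ᶠ t : ℝ in 𝓝 0, ND1 n (c + t • c) := by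
    have h1 := hl.tendsto 0
    simp only [zero_smul, add_zero] at h1
    exact h1.eventually hc.1.eventually
  obtain ⟨k, hk⟩ : ∃ k, Module.finrank ℝ E = k + 1 := ⟨_, (Nat.sub_add_cancel hd).symm⟩
  have ev2 : (fun t : ℝ => grad μ n (c + t • c) g) =ᶠ[𝓝 0] fun t => (1 + t) ^ k * grad μ n c g := by
    filter_upwards [ev, lt_mem_nhds (show (-1:ℝ) < 0 by norm_num)] with t ht ht1
    have hp : 0 < 1 + t := by linarith
    have e : c + t • c = (1 + t) • c := by ext; simp; ring
    rw [e] at ht ⊢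
    have h2 := vol_hasFDerivAt μ hb ht
    have h3 : HasFDerivAt (fun c' : I → ℝ => vol μ n ((1 + t) • c'))
      ((grad μ n ((1 + t) • c)).comp ((1 + t) • ContinuousLinearMap.id ℝ (I → ℝ))) c :=
        h2.comp c ((hasFDerivAt_id c).const_smul (1 + t))
    have h4 : (fun c' : I → ℝ => vol μ n ((1 + t) • c')) = fun c' => (1 + t) ^ (k + 1) * vol μ n c' := by
      ext c'
      rw [vol_smul μ n c' hp, hk]
    rw [h4] at h3
    have := DFunLike.congr_fun (h3.unique ((vol_hasFDerivAt μ hb hc.1).const_mul _)) g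
    simp at this
    rw [pow_succ'] at this
    refine mul_left_cancel₀ hp.ne' ?_
    linarith
  have h5 : HasDerivAt (fun t : ℝ => (1 + t) ^ k * grad μ n c g) (k * grad μ n c g) 0 := by
    have := (((hasDerivAt_id (0:ℝ)).const_add 1).fun_pow k).mul_const (grad μ n c g)
    simpa using this
  rw [h1.unique (h5.congr_of_eventuallyEq ev2), hk]
  push_cast; ring

/-- the matrix of the Hessian -/
noncomputable def MM (n : I → E →L[ℝ] ℝ) (i j : I) : ℝ := dfacet μ n i 1 (Pi.single j 1)

theorem dfacet_eq (n : I → E →L[ℝ] ℝ) (i : I) (f : I → ℝ) : dfacet μ n i 1 f = ∑ j, MM μ n i j * f j := by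
  have : f = ∑ j, f j • (Pi.single j 1 : I → ℝ) := by
    ext k; simp [Finset.sum_apply, Pi.single_apply]
  conv_lhs => rw [this]
  rw [_root_.map_sum]
  refine Finset.sum_congr rfl fun j _ => ?_
  rw [map_smul, MM, smul_eq_mul, mul_comm]

theorem hess_MM (n : I → E →L[ℝ] ℝ) (f g : I → ℝ) : hess μ n 1 f g = ∑ i, ∑ j, MM μ n i j * f j * g i := by
  rw [hess_apply]
  simp_rw [dfacet_eq, Finset.sum_mul]

theorem MM_symm {n : I → E →L[ℝ] ℝ} (hb : Bdd n) (hc : ND2 n 1) (i j : I) : MM μ n i j = MM μ n j i := by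
  have := hess_symm μ hb hc (Pi.single j 1) (Pi.single i 1)
  simpa [hess_apply, Pi.single_apply, MM] using this

theorem MM_off {n : I → E →L[ℝ] ℝ} {i j : I} (hi : n i ≠ 0) (hij : i ≠ j) :
    MM μ n i j = sliceK μ (n i) * facet addHaar (resN n (n i)) j (lev n i 1 1) := by
  rw [MM, dfacet, if_neg hi]
  have : levL n i (Pi.single j 1) = Pi.single j 1 := by
    ext k
    rw [levL_apply]
    by_cases hk : k = i
    · subst hk; simp [hij]
    · simp [hk, hij]
  simp [this, grad_apply, Pi.single_apply]

theorem MM_nonneg {n : I → E →L[ℝ] ℝ} {i j : I} (hi : n i ≠ 0) (hij : i ≠ j) : 0 ≤ MM μ n i j := by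
  rw [MM_off μ hi hij]
  exact mul_nonneg (sliceK_pos μ _).le (facet_nonneg _ _ _ _)

theorem MM_row {n : I → E →L[ℝ] ℝ} (hb : Bdd n) (hc : ND2 n 1) (hd : 1 ≤ Module.finrank ℝ E) (i : I) :
    ∑ j, MM μ n i j = ((Module.finrank ℝ E : ℝ) - 1) * facet μ n i 1 := by
  have := hess_homog μ hb hc (Pi.single i 1) hd
  simpa [hess_apply, Pi.single_apply, grad_apply, dfacet_eq] using this

theorem MM_lin {n : I → E →L[ℝ] ℝ} (hb : Bdd n) (hc : ND2 n 1) (i : I) (x : E) :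
    ∑ j, MM μ n i j * n j x = 0 := by
  have := hess_translate μ hb hc x (Pi.single i 1)
  simpa [hess_apply, Pi.single_apply, grad_apply, dfacet_eq] using this

/-- edge condition -/
theorem EC_of_MM {n : I → E →L[ℝ] ℝ} {i j : I} (hi : n i ≠ 0) (hij : i ≠ j)
    (hM : MM μ n i j ≠ 0) (a : E →L[ℝ] ℝ) (ha : ∀ x ∈ Kset n 1, n i x = 1 → n j x = 1 → a x = 1) :
    ∃ α β : ℝ, α + β = 1 ∧ a = α • n i + β • n j := by
  rw [MM_off μ hi hij] at hM
  have hF := right_ne_zero_of_mul hM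
  set V := (n i).ker
  set m := resN n (n i) with hm
  have hmj : m j ≠ 0 := by
    intro h0
    rw [facet, if_pos h0] at hF
    exact hF rfl
  rw [facet, if_neg hmj] at hF
  have hv := right_ne_zero_of_mul hF
  set c := lev n i 1 1 with hc
  have hcj : c j = 1 - n j (sliceU (n i)) := by simp [hc, lev, hij.symm]
  set W := (m j).ker
  set K := Kset (resN m (m j)) (lev m j c (c j)) with hK
  have hKpos : (addHaar : Measure W) K ≠ 0 := by
    intro h0
    apply hv
    rw [vol, measureReal_def, h0]; rfl
  set u := sliceU (n i)
  set u' := sliceU (m j)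
  let x0 : E := u + c j • (u' : E)
  have hu : n i u = 1 := sliceU_spec hi
  have hu' : n j (u' : E) = 1 := sliceU_spec hmj
  have hu'' : n i (u' : E) = 0 := u'.2
  have hpt : ∀ w ∈ K, n i (x0 + ((w : V) : E)) = 1 ∧ n j (x0 + ((w : V) : E)) = 1 ∧ x0 + ((w : V) : E) ∈ Kset n 1 := by
    intro w hw
    have hw1 : n i ((w : V) : E) = 0 := (w : V).2
    have hw2 : n j ((w : V) : E) = 0 := w.2
    have e1 : n i (x0 + ((w : V) : E)) = 1 := by simp [x0, hu, hu'', hw1]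
    have e2 : n j (x0 + ((w : V) : E)) = 1 := by simp [x0, hu', hw2, hcj]
    refine ⟨e1, e2, fun k => ?_⟩
    rw [hK, mem_sec] at hw
    by_cases hki : k = i
    · subst hki; exact e1.le
    · by_cases hkj : k = j
      · subst hkj; exact e2.le
      · have := hw k hkj
        have h5 : n k ((w : V) : E) ≤ c k - n k (u' : E) * c j := this
        have h6 : c k = 1 - n k u := by simp [hc, lev, hki, u]
        simp [x0]; linarith
  have hav : ∀ w : W, a ((w : V) : E) = 0 := by
    by_contra hcon
    push Not at hcon
    let a' : W →L[ℝ] ℝ := (a.comp V.subtypeL).comp W.subtypeL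
    have ha' : a' ≠ 0 := by
      obtain ⟨w, hw⟩ := hcon
      intro h0
      exact hw (DFunLike.congr_fun h0 w)
    apply hKpos
    refine measure_mono_null ?_ (level_null addHaar a' ha' (1 - a x0))
    intro w hw
    obtain ⟨e1, e2, e3⟩ := hpt w hw
    have := ha _ e3 e1 e2
    rw [map_add] at this
    change a ((w : V) : E) = 1 - a x0
    linarith
  obtain ⟨w, hw⟩ := nonempty_of_measure_ne_zero hKpos
  obtain ⟨e1, e2, e3⟩ := hpt w hw
  have := ha _ e3 e1 e2
  have ea : a = (a u - n j u * a u') • n i + a u' • n j := by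
    ext x
    let v : V := ⟨x - n i x • u, by simp [V, hu]⟩
    let z : W := ⟨v - n j (v : E) • u', by
      show n j ((v - n j (v : E) • u' : V) : E) = 0
      simp [hu']⟩
    have h1 := hav z
    have h2 : ((z : V) : E) = x - n i x • u - n j (x - n i x • u) • (u' : E) := rfl
    rw [h2] at h1
    simp at h1 ⊢
    linarith
  refine ⟨_, _, ?_, ea⟩
  rw [ea] at this
  simp [e1, e2] at this
  linarith
end
end CSV

namespace CSV
open MeasureTheory MeasureTheory.Measure Set Filter Topology
open scoped ENNReal Pointwise
set_option linter.unusedSectionVars false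

theorem logconc_le (φ : ℝ → ℝ) (h0 : 0 < φ 0) (hnn : ∀ t, 0 ≤ φ t)
    (hmid : ∀ t, φ t * φ 0 ≤ φ (t / 2) ^ 2) (hd : HasDerivAt φ 0 0) {T : ℝ} (hT : 0 < T) : φ T ≤ φ 0 := by
  by_contra hcon
  push Not at hcon
  set δ := Real.log (φ T) - Real.log (φ 0) with hδ
  have hδp : 0 < δ := sub_pos.2 (Real.log_lt_log h0 hcon)
  have key : ∀ k : ℕ, 0 < φ (T / 2 ^ k) ∧ δ / 2 ^ k ≤ Real.log (φ (T / 2 ^ k)) - Real.log (φ 0) := by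
    intro k
    induction k with
    | zero => simpa using ⟨h0.trans hcon, hδ.le⟩
    | succ k ih =>
      obtain ⟨h1, h2⟩ := ih
      have h3 := hmid (T / 2 ^ k)
      have e : T / 2 ^ k / 2 = T / 2 ^ (k + 1) := by rw [pow_succ, div_div]
      have e' : δ / 2 ^ (k + 1) = δ / 2 ^ k / 2 := by rw [pow_succ, div_div]
      rw [e] at h3
      have h4 : 0 < φ (T / 2 ^ (k + 1)) := by
        refine lt_of_le_of_ne (hnn _) fun h5 => ?_
        rw [← h5] at h3
        have := mul_pos h1 h0
        simp at h3; linarith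
      refine ⟨h4, ?_⟩
      have h5 := Real.log_le_log (mul_pos h1 h0) h3
      rw [Real.log_mul h1.ne' h0.ne', Real.log_pow] at h5
      push_cast at h5
      rw [e']; linarith
  have hl := hd.log h0.ne'
  rw [zero_div, hasDerivAt_iff_tendsto_slope_zero] at hl
  have ht : Tendsto (fun k : ℕ => T / 2 ^ k) atTop (𝓝[≠] 0) := by
    rw [tendsto_nhdsWithin_iff]
    constructor
    · have := (tendsto_pow_atTop_nhds_zero_of_lt_one (r := (2⁻¹ : ℝ)) (by norm_num) (by norm_num)).const_mul T
      simpa [div_eq_mul_inv] using this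
    · exact Eventually.of_forall fun k => by
        have : 0 < T / 2 ^ k := by positivity
        exact this.ne'
  have := ge_of_tendsto (hl.comp ht) (b := δ / T) (Eventually.of_forall fun k => by
    obtain ⟨h1, h2⟩ := key k
    simp only [Function.comp, zero_add, smul_eq_mul, inv_div]
    calc δ / T = 2 ^ k / T * (δ / 2 ^ k) := by field_simp
      _ ≤ _ := by gcongr)
  have := div_pos hδp hT
  linarith

section
variable {I : Type*} [Fintype I] [DecidableEq I] {E : Type*} [NormedAddCommGroup E] [NormedSpace ℝ E]
    [FiniteDimensional ℝ E] [MeasurableSpace E] [BorelSpace E] (μ : Measure E) [IsAddHaarMeasure μ]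

theorem facets_span {m : I → E →L[ℝ] ℝ} (hb : Bdd m) {c : I → ℝ} (hc : ND1 m c) (hv : 0 < vol μ m c)
    (y : E) (hy : ∀ j, facet μ m j c ≠ 0 → m j y = 0) : y = 0 := by
  by_contra hy0
  let f : I → ℝ := fun j => max (m j y) 0
  have hg : grad μ m c f = 0 := by
    rw [grad_apply]
    refine Finset.sum_eq_zero fun j _ => ?_
    by_cases hj : facet μ m j c = 0
    · rw [hj, zero_mul]
    · simp [f, hy j hj]
  have hd := (line_deriv1 μ hb hc f).self_of_nhds
  simp only [zero_smul, add_zero, hg] at hd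
  have hle : ∀ T : ℝ, 0 < T → vol μ m (c + T • f) ≤ vol μ m c := by
    intro T hT
    have := logconc_le (fun t : ℝ => vol μ m (c + t • f)) (by simpa using hv) (fun t => vol_nonneg _ _ _) (by
      intro t
      have := vol_logconcave μ hb (c + t • f) (c + (0:ℝ) • f)
      convert this using 3
      ext j; simp; ring) hd hT
    simpa using this
  have hK := hb.compact c
  obtain ⟨R, hR⟩ := hK.isBounded.exists_norm_le
  have hyn : 0 < ‖y‖ := norm_pos_iff.2 hy0
  have hRnn : 0 ≤ R := by
    have : (Kset m c).Nonempty := by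
      by_contra he
      rw [not_nonempty_iff_eq_empty] at he
      rw [vol, he, measureReal_empty] at hv
      exact lt_irrefl _ hv
    obtain ⟨x, hx⟩ := this
    exact (norm_nonneg x).trans (hR x hx)
  set T := (2 * R + 1) / ‖y‖ with hT
  have hTp : 0 < T := by positivity
  have hTy : T * ‖y‖ = 2 * R + 1 := by rw [hT, div_mul_cancel₀ _ hyn.ne']
  have hsub : Kset m c ∪ (fun x => x + (-(T • y))) ⁻¹' Kset m c ⊆ Kset m (c + T • f) := by
    rintro x (hx | hx) j
    · have := hx j
      have : 0 ≤ T * f j := mul_nonneg hTp.le (le_max_right _ _)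
      simp; linarith
    · have h1 := hx j
      have : T * m j y ≤ T * f j := mul_le_mul_of_nonneg_left (le_max_left _ _) hTp.le
      simp at h1 ⊢; linarith
  have hdisj : Disjoint (Kset m c) ((fun x => x + (-(T • y))) ⁻¹' Kset m c) := by
    rw [Set.disjoint_left]
    intro x hx hx'
    have h1 := hR _ hx
    have h2 := hR _ hx'
    have h3 : ‖T • y‖ ≤ ‖x‖ + ‖x + (-(T • y))‖ := by
      have : T • y = x - (x + (-(T • y))) := by abel
      conv_lhs => rw [this]
      exact norm_sub_le _ _
    rw [norm_smul, Real.norm_eq_abs, abs_of_pos hTp, hTy] at h3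
    linarith
  have hfin := hK.measure_lt_top (μ := μ)
  have hm2 : MeasurableSet ((fun x => x + (-(T • y))) ⁻¹' Kset m c) :=
    (measurable_add_const _) hK.measurableSet
  have h1 : vol μ m c + vol μ m c ≤ vol μ m (c + T • f) := by
    have e : vol μ m c = μ.real ((fun x => x + (-(T • y))) ⁻¹' Kset m c) := by
      rw [vol, measureReal_def, measureReal_def, measure_preimage_add_right]
    nth_rewrite 2 [e]
    rw [vol, ← measureReal_union hdisj hm2 hfin.ne (by rw [measure_preimage_add_right]; exact hfin.ne)]
    exact measureReal_mono hsub (hb.compact _).measure_lt_top.ne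
  have := hle T hTp
  linarith

variable {n : I → E →L[ℝ] ℝ} {ι : I → I} (h : Good n ι)
include h

theorem Good.invol (i : I) : ι (ι i) = i := by
  by_contra hne
  exact h.inj hne (by rw [h.symm, h.symm, neg_neg])

theorem Good.grad_odd {f : I → ℝ} (hf : ∀ i, f (ι i) = - f i) : grad μ n 1 f = 0 := by
  have hs : ∀ t : ℝ, vol μ n (1 + t • f) = vol μ n (1 + (-t) • f) := by
    intro t
    have : Kset n (1 + t • f) = - Kset n (1 + (-t) • f) := by
      ext x
      simp only [Kset, mem_ofPred_eq, Set.mem_neg]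
      constructor
      · intro hx i
        have := hx (ι i)
        rw [h.symm] at this
        simpa [hf] using this
      · intro hx i
        have := hx (ι i)
        rw [h.symm] at this
        simpa [hf] using this
    rw [vol, vol, this, measureReal_def, measureReal_def, Measure.measure_neg]
  have h1 := (line_deriv1 μ h.bdd h.nd1 f).self_of_nhds
  have h2 : HasDerivAt (fun t : ℝ => vol μ n (1 + (-t) • f)) (- grad μ n (1 + (0:ℝ) • f) f) 0 := by
    have h3 : HasDerivAt (fun t : ℝ => vol μ n (1 + t • f)) (grad μ n (1 + (0:ℝ) • f) f) (-0) := by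
      simpa using h1
    have := h3.scomp (0 : ℝ) (hasDerivAt_neg (0 : ℝ))
    simpa [Function.comp_def] using this
  simp_rw [← hs] at h2
  have := h1.unique h2
  simp only [zero_smul, add_zero] at this
  linarith

theorem Good.MM_span (i : I) (y : E) (hi : n i y = 0) (hj : ∀ j, j ≠ i → MM μ n i j ≠ 0 → n j y = 0) : y = 0 := by
  have hv : 0 < facet μ n i 1 := by
    obtain ⟨x, hx, hx'⟩ := h.expo i
    exact facet_pos μ h.bdd (h.ne i) x hx hx'
  rw [facet, if_neg (h.ne i)] at hv
  have hv' := pos_of_mul_pos_right hv (sliceK_pos μ _).le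
  have := facets_span addHaar (h.bdd.res (n i)) (h.nd2.2 i (h.ne i)) hv' ⟨y, hi⟩ (by
    intro j hF
    by_cases hji : j = i
    · subst hji; exact hi
    · refine hj j hji ?_
      rw [MM_off μ (h.ne i) (Ne.symm hji)]
      exact mul_ne_zero (sliceK_pos μ _).ne' hF)
  exact congrArg Subtype.val this
end
end CSV

namespace CSV
open MeasureTheory MeasureTheory.Measure Set Filter Topology
open scoped ENNReal Pointwise
set_option linter.unusedSectionVars false

theorem sum_trick {I : Type*} [Fintype I] (M : I → I → ℝ) (hM : ∀ i j, M i j = M j i) (δ : I → ℝ)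
    (G w : I → I → ℝ) (hG : ∀ i j, G i j = (δ i + δ j + w i j) / 2) (hδ : ∀ i, 0 ≤ δ i)
    (hα : ∀ i, 0 < ∑ j, M i j) (hw : ∀ i j, 0 ≤ M i j * w i j) (hS : ∑ i, ∑ j, M i j * G i j ≤ 0) :
    ∑ i, ∑ j, M i j * G i j = 0 ∧ (∀ i, δ i = 0) ∧ (∀ i j, M i j * w i j = 0) := by
  have e1 : ∑ i, ∑ j, M i j * δ i = ∑ i, (∑ j, M i j) * δ i := by
    simp_rw [Finset.sum_mul]
  have e2 : ∑ i, ∑ j, M i j * δ j = ∑ i, (∑ j, M i j) * δ i := by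
    rw [Finset.sum_comm]
    simp_rw [Finset.sum_mul]
    exact Finset.sum_congr rfl fun i _ => Finset.sum_congr rfl fun j _ => by rw [hM]
  have e3 : ∑ i, ∑ j, M i j * G i j = ∑ i, (∑ j, M i j) * δ i + (∑ i, ∑ j, M i j * w i j) / 2 := by
    have : ∀ i j, M i j * G i j = (M i j * δ i) / 2 + (M i j * δ j) / 2 + (M i j * w i j) / 2 := by
      intro i j; rw [hG]; ring
    simp_rw [this, Finset.sum_add_distrib, ← Finset.sum_div]
    rw [e1, e2]; ring
  have n1 : 0 ≤ ∑ i, (∑ j, M i j) * δ i := Finset.sum_nonneg fun i _ => mul_nonneg (hα i).le (hδ i)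
  have n2 : 0 ≤ ∑ i, ∑ j, M i j * w i j := Finset.sum_nonneg fun i _ => Finset.sum_nonneg fun j _ => hw i j
  have z1 : ∑ i, (∑ j, M i j) * δ i = 0 := by linarith
  have z2 : ∑ i, ∑ j, M i j * w i j = 0 := by linarith
  refine ⟨by linarith, ?_, ?_⟩
  · intro i
    have := (Finset.sum_eq_zero_iff_of_nonneg fun i _ => mul_nonneg (hα i).le (hδ i)).1 z1 i (Finset.mem_univ i)
    exact (mul_eq_zero.1 this).resolve_left (hα i).ne'
  · intro i j
    have := (Finset.sum_eq_zero_iff_of_nonneg fun i _ => Finset.sum_nonneg fun j _ => hw i j).1 z2 i (Finset.mem_univ i)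
    exact (Finset.sum_eq_zero_iff_of_nonneg fun j _ => hw i j).1 this j (Finset.mem_univ j)

variable {I : Type*} [Fintype I] [DecidableEq I] {E : Type*} [NormedAddCommGroup E] [InnerProductSpace ℝ E]
  [FiniteDimensional ℝ E] [MeasurableSpace E] [BorelSpace E]

theorem abstract_thm (μ : Measure E) [IsAddHaarMeasure μ] {e : ℕ} (p : I → E) (ι : I → I)
    (h : Good (fun i => innerSL ℝ (p i)) ι) (hd : 2 ≤ Module.finrank ℝ E)
    (q : I → EuclideanSpace ℝ (Fin e)) (hq : ∀ i, q (ι i) = - q i)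
    (h1 : ∀ i j, i ≠ j → (∀ a : E, (∀ x ∈ Kset (fun i => innerSL ℝ (p i)) 1, inner ℝ (p i) x = 1 →
        inner ℝ (p j) x = 1 → inner ℝ a x = 1) → ∃ α β : ℝ, α + β = 1 ∧ a = α • p i + β • p j) →
        ‖q i - q j‖ ≤ ‖p i - p j‖)
    (h2 : ∀ i, ‖p i‖ ≤ ‖q i‖) (i j : I) : inner ℝ (q i) (q j) = inner ℝ (p i) (p j) := by
  set n : I → E →L[ℝ] ℝ := fun i => innerSL ℝ (p i) with hn
  set M := MM μ n with hM
  have hb := h.bdd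
  have hsymm : ∀ i j, M i j = M j i := fun i j => MM_symm μ hb h.nd2 i j
  let f : Fin e → I → ℝ := fun a i => q i a
  have hgrad : ∀ a, grad μ n 1 (f a) = 0 := fun a => h.grad_odd μ (fun i => by simp [f, hq])
  have hvol : 0 < vol μ n 1 := vol_pos μ hb 0 (by simp)
  have hhess : ∀ a, hess μ n 1 (f a) (f a) ≤ 0 := by
    intro a
    have := hess_le μ hb h.nd2 (f a)
    rw [hgrad] at this
    by_contra hc
    push Not at hc
    have := mul_pos hvol hc
    simp at *
    linarith
  have hplin : ∑ i, ∑ j, M i j * inner ℝ (p i) (p j) = 0 := by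
    refine Finset.sum_eq_zero fun i _ => ?_
    have := MM_lin μ hb h.nd2 i (p i)
    rw [← this]
    refine Finset.sum_congr rfl fun j _ => ?_
    simp [hn, real_inner_comm, hM]
  have hqin : ∀ i j, inner ℝ (q i) (q j) = ∑ a, f a j * f a i := by
    intro i j
    rw [PiLp.inner_apply]
    simp [f]
  have hsum : ∑ i, ∑ j, M i j * inner ℝ (q i) (q j) = ∑ a, hess μ n 1 (f a) (f a) := by
    simp_rw [hess_MM, hqin, Finset.mul_sum]
    symm
    rw [Finset.sum_comm]
    refine Finset.sum_congr rfl fun i _ => ?_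
    rw [Finset.sum_comm]
    refine Finset.sum_congr rfl fun j _ => Finset.sum_congr rfl fun a _ => ?_
    rw [mul_assoc]
  have hMd : ∀ i, 0 < ∑ j, M i j := by
    intro i
    rw [hM, MM_row μ hb h.nd2 (by omega)]
    obtain ⟨x, hx, hx'⟩ := h.expo i
    refine mul_pos ?_ (facet_pos μ h.bdd (h.ne i) x hx hx')
    have : (2 : ℝ) ≤ Module.finrank ℝ E := by exact_mod_cast hd
    linarith
  have hEC : ∀ i j, i ≠ j → M i j ≠ 0 → ‖q i - q j‖ ≤ ‖p i - p j‖ := by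
    intro i j hij hMij
    refine h1 i j hij fun a ha => ?_
    obtain ⟨α, β, hab, he⟩ := EC_of_MM μ (h.ne i) hij hMij (innerSL ℝ a) ha
    refine ⟨α, β, hab, ?_⟩
    have : innerSL ℝ a = innerSL ℝ (α • p i + β • p j) := by rw [he]; simp [hn]
    refine ext_inner_right ℝ fun v => ?_
    simpa [inner_add_left, inner_smul_left] using congrArg (fun F => F v) this
  obtain ⟨r1, r2, r3⟩ := sum_trick M hsymm (fun i => ‖q i‖ ^ 2 - ‖p i‖ ^ 2)
    (fun i j => inner ℝ (q i) (q j) - inner ℝ (p i) (p j))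
    (fun i j => ‖p i - p j‖ ^ 2 - ‖q i - q j‖ ^ 2) (by
      intro i j
      simp only [norm_sub_sq_real]; ring) (by
      intro i
      have := pow_le_pow_left₀ (norm_nonneg _) (h2 i) 2
      simpa using this) hMd (by
      intro i j
      by_cases hij : i = j
      · simp [hij]
      by_cases hM0 : M i j = 0
      · simp [hM0]
      have := pow_le_pow_left₀ (norm_nonneg _) (hEC i j hij hM0) 2
      exact mul_nonneg (MM_nonneg μ (h.ne i) hij) (by simpa using this)) (by
      simp_rw [mul_sub, Finset.sum_sub_distrib]
      rw [hplin, hsum, sub_zero]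
      exact Finset.sum_nonpos fun a _ => hhess a)
  simp_rw [mul_sub, Finset.sum_sub_distrib] at r1
  rw [hplin, hsum, sub_zero] at r1
  have hz : ∀ a, hess μ n 1 (f a) (f a) = 0 := fun a =>
    (Finset.sum_eq_zero_iff_of_nonpos fun a _ => hhess a).1 r1 a (Finset.mem_univ a)
  choose b hbb using fun a => h.strict μ (hgrad a) (hz a)
  have hdiag : ∀ i, inner ℝ (q i) (q i) = inner ℝ (p i) (p i) := by
    intro i
    have := r2 i
    simp only [real_inner_self_eq_norm_sq]; linarith
  have hoff : ∀ i j, M i j ≠ 0 → inner ℝ (q i) (q j) = inner ℝ (p i) (p j) := by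
    intro i j hMij
    have h3 := (mul_eq_zero.1 (r3 i j)).resolve_left hMij
    have h4 := r2 i
    have h5 := r2 j
    simp only [norm_sub_sq_real] at h3 h4 h5
    linarith
  let D : E →ₗ[ℝ] ℝ := ∑ a, (f a i) • ((b a) ∘ₗ (innerSL ℝ : E →L[ℝ] E →L[ℝ] ℝ).toLinearMap) - (innerSL ℝ (p i)).toLinearMap
  have hD : ∀ j, D (p j) = inner ℝ (q i) (q j) - inner ℝ (p i) (p j) := by
    intro j
    rw [hqin]
    simp only [D, LinearMap.sub_apply, LinearMap.sum_apply, LinearMap.smul_apply]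
    simp [hbb, hn, mul_comm]
  let y := (InnerProductSpace.toDual ℝ E).symm D.toContinuousLinearMap
  have hy : ∀ v, inner ℝ y v = D v := by
    intro v
    simp [y]
  have hy0 : y = 0 := by
    refine h.MM_span μ i y ?_ ?_
    · show inner ℝ (p i) y = 0
      rw [real_inner_comm, hy, hD, hdiag, sub_self]
    · intro j _ hMij
      show inner ℝ (p j) y = 0
      rw [real_inner_comm, hy, hD, hoff i j hMij, sub_self]
  have := hD j
  rw [← hy, hy0, inner_zero_left] at this
  linarith
end CSV

namespace CSV
open MeasureTheory MeasureTheory.Measure Set Filter Topology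
open scoped ENNReal Pointwise
set_option linter.unusedSectionVars false

theorem eq_zero_of_eq_neg {W : Type*} [AddCommGroup W] [Module ℝ W] {v : W} (h : v = -v) : v = 0 := by
  have h1 : (2 : ℝ) • v = 0 := by
    rw [two_smul]; nth_rewrite 2 [h]; exact add_neg_cancel v
  exact (smul_eq_zero.1 h1).resolve_left (by norm_num)

theorem seg_nonneg {W : Type*} [AddCommGroup W] [Module ℝ W] {P : Set W} {u v a : W}
    (hu : u ∈ Set.extremePoints ℝ P) (hv : v ∈ P) (huv : u ≠ v) (ha : a ∈ P) {α β : ℝ}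
    (hab : α + β = 1) (he : a = α • u + β • v) : 0 ≤ β := by
  by_contra hc
  push Not at hc
  have hα : 0 < α := by linarith
  have h1 : u ∈ openSegment ℝ v a := by
    refine ⟨-β / α, 1 / α, div_pos (by linarith) hα, by positivity, ?_, ?_⟩
    · field_simp; linarith
    · rw [he, smul_add, smul_smul, smul_smul, neg_div]
      have : 1 / α * α = 1 := by field_simp
      rw [this, show 1 / α * β = β / α by ring]
      module
  exact huv ((mem_extremePoints.1 hu).2 v hv a ha h1).1.symm

section
variable {n d : ℕ} (p : Fin n → EuclideanSpace ℝ (Fin d))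

/-- the vertices as elements of their span -/
noncomputable def lift (i : Fin n) : Submodule.span ℝ (range p) := ⟨p i, Submodule.subset_span ⟨i, rfl⟩⟩

variable {p}

theorem hull_sub : convexHull ℝ (range p) ⊆ Submodule.span ℝ (range p) :=
  convexHull_min Submodule.subset_span (Submodule.convex _)

theorem hull_le {x a : EuclideanSpace ℝ (Fin d)} (hx : ∀ i, inner ℝ (p i) x ≤ 1) (ha : a ∈ convexHull ℝ (range p)) :
    inner ℝ a x ≤ 1 := by
  have : convexHull ℝ (range p) ⊆ {a | inner ℝ a x ≤ (1 : ℝ)} := by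
    refine convexHull_min ?_ ?_
    · rintro _ ⟨i, rfl⟩; exact hx i
    · exact convex_halfSpace_le (𝕜 := ℝ) ⟨fun a b => inner_add_left a b x, fun c a => by simp [inner_smul_left]⟩ 1
  exact this ha

theorem edge_of_EC (hinj : Function.Injective p)
    (hvert : ∀ i, p i ∈ Set.extremePoints ℝ (convexHull ℝ (Set.range p))) {i j : Fin n} (hij : i ≠ j)
    (hEC : ∀ a : Submodule.span ℝ (range p), (∀ x ∈ Kset (fun i => innerSL ℝ (lift p i)) 1, inner ℝ (lift p i) x = 1 →
        inner ℝ (lift p j) x = 1 → inner ℝ a x = 1) → ∃ α β : ℝ, α + β = 1 ∧ a = α • lift p i + β • lift p j) :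
    IsEdge p i j := by
  refine ⟨hij, ?_⟩
  have hP : ∀ i, p i ∈ convexHull ℝ (range p) := fun i => subset_convexHull ℝ _ ⟨i, rfl⟩
  refine ⟨(convex_convexHull ℝ _).segment_subset (hP i) (hP j), ?_⟩
  intro a ha b hb z hz hzab
  obtain ⟨α, β, hab, he⟩ := hEC ⟨a, hull_sub ha⟩ (by
    intro x hx hxi hxj
    have hx' : ∀ i, inner ℝ (p i) (x : EuclideanSpace ℝ (Fin d)) ≤ 1 := fun i => hx i
    have h1 := hull_le hx' ha
    have h2 := hull_le hx' hb
    obtain ⟨s, t, hs, ht, hst, rfl⟩ := hz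
    obtain ⟨s', t', hs', ht', hst', hh⟩ := hzab
    have h3 := congrArg (fun v => inner ℝ v (x : EuclideanSpace ℝ (Fin d))) hh
    simp only [inner_add_left, inner_smul_left] at h3
    have hxi' : inner ℝ (p i) (x : EuclideanSpace ℝ (Fin d)) = 1 := hxi
    have hxj' : inner ℝ (p j) (x : EuclideanSpace ℝ (Fin d)) = 1 := hxj
    rw [hxi', hxj'] at h3
    simp at h3
    show inner ℝ a (x : EuclideanSpace ℝ (Fin d)) = 1
    refine le_antisymm h1 ?_
    by_contra hc
    push Not at hc
    have := mul_lt_mul_of_pos_left hc hs'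
    have := mul_le_mul_of_nonneg_left h2 ht'.le
    linarith)
  have he' : a = α • p i + β • p j := congrArg Subtype.val he
  have hβ := seg_nonneg (hvert i) (hP j) (hinj.ne hij) ha hab he'
  have hα := seg_nonneg (hvert j) (hP i) (hinj.ne hij.symm) ha (by rw [add_comm]; exact hab) (by rw [he', add_comm])
  exact ⟨α, β, hα, hβ, hab, he'.symm⟩

variable {ι : Fin n → Fin n}

theorem expo_lift (hinj : Function.Injective p)
    (hvert : ∀ i, p i ∈ Set.extremePoints ℝ (convexHull ℝ (Set.range p)))
    (hpsym : ∀ i, p (ι i) = -p i) (h0 : ∀ i, p i ≠ 0) (i : Fin n) :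
    ∃ x : Submodule.span ℝ (range p), inner ℝ (lift p i) x = 1 ∧ ∀ j ≠ i, inner ℝ (lift p j) x < 1 := by
  have hc := ((convex_convexHull ℝ (range p)).mem_extremePoints_iff_convex_sdiff.1 (hvert i)).2
  have hsub : convexHull ℝ (p '' {i}ᶜ) ⊆ convexHull ℝ (range p) \ {p i} := by
    refine convexHull_min ?_ hc
    rintro _ ⟨j, hj, rfl⟩
    exact ⟨subset_convexHull ℝ _ ⟨j, rfl⟩, fun h => hj (hinj h)⟩
  have hni : p i ∉ convexHull ℝ (p '' {i}ᶜ) := fun h => (hsub h).2 rfl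
  obtain ⟨f, u, h1, h2⟩ := geometric_hahn_banach_closed_point (convex_convexHull ℝ (p '' {i}ᶜ))
    ((Set.toFinite (p '' {i}ᶜ)).isClosed_convexHull ℝ) hni
  have h3 : ∀ j ≠ i, f (p j) < f (p i) := fun j hj => (h1 _ (subset_convexHull ℝ _ ⟨j, hj, rfl⟩)).trans h2
  have hii : ι i ≠ i := by
    intro h
    have := hpsym i
    rw [h] at this
    exact h0 i (CSV.eq_zero_of_eq_neg this)
  have h4 : 0 < f (p i) := by
    have := h3 _ hii
    rw [hpsym, map_neg] at this
    linarith
  let y := (InnerProductSpace.toDual ℝ (Submodule.span ℝ (range p))).symm (f.comp (Submodule.subtypeL _))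
  have hy : ∀ j, inner ℝ (lift p j) y = f (p j) := by
    intro j
    rw [real_inner_comm, InnerProductSpace.toDual_symm_apply]
    rfl
  have hs : ∀ j, inner ℝ (lift p j) ((f (p i))⁻¹ • y) = (f (p i))⁻¹ * inner ℝ (lift p j) y := fun j =>
    real_inner_smul_right (p j) (y : EuclideanSpace ℝ (Fin d)) _
  refine ⟨(f (p i))⁻¹ • y, ?_, ?_⟩
  · rw [hs, hy, inv_mul_cancel₀ h4.ne']
  · intro j hj
    rw [hs, hy, inv_mul_lt_iff₀ h4, mul_one]
    exact h3 j hj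

theorem good_lift (hinj : Function.Injective p)
    (hvert : ∀ i, p i ∈ Set.extremePoints ℝ (convexHull ℝ (Set.range p)))
    (hpsym : ∀ i, p (ι i) = -p i) (h0 : ∀ i, p i ≠ 0) : Good (fun i => innerSL ℝ (lift p i)) ι where
  bdd := by
    intro x hx
    have h1 : ∀ i, inner ℝ (p i) (x : EuclideanSpace ℝ (Fin d)) = 0 := by
      intro i
      have a1 : inner ℝ (p i) (x : EuclideanSpace ℝ (Fin d)) ≤ 0 := hx i
      have a2 : inner ℝ (p (ι i)) (x : EuclideanSpace ℝ (Fin d)) ≤ 0 := hx (ι i)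
      rw [hpsym, inner_neg_left] at a2
      linarith
    have h2 : ∀ v ∈ Submodule.span ℝ (range p), inner ℝ v (x : EuclideanSpace ℝ (Fin d)) = 0 := by
      intro v hv
      induction hv using Submodule.span_induction with
      | mem v hv => obtain ⟨i, rfl⟩ := hv; exact h1 i
      | zero => simp
      | add a b _ _ ha hb => rw [inner_add_left, ha, hb, add_zero]
      | smul c a _ ha => rw [inner_smul_left, ha, mul_zero]
    have := h2 x x.2
    exact Subtype.ext (inner_self_eq_zero.1 this)
  symm := by
    intro i
    have : lift p (ι i) = - lift p i := Subtype.ext (hpsym i)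
    simp [this]
  expo := expo_lift hinj hvert hpsym h0

theorem low_dim (hinj : Function.Injective p)
    (hvert : ∀ i, p i ∈ Set.extremePoints ℝ (convexHull ℝ (Set.range p)))
    (hpsym : ∀ i, p (ι i) = -p i) (h0 : ∀ i, p i ≠ 0) (hι : Function.Involutive ι)
    (hd : Module.finrank ℝ (Submodule.span ℝ (range p)) ≤ 1) (i j : Fin n) : j = i ∨ j = ι i := by
  by_contra hc
  push Not at hc
  obtain ⟨hji, hji'⟩ := hc
  obtain ⟨v, hv⟩ := finrank_le_one_iff.1 hd
  obtain ⟨c, hc⟩ := hv (lift p i)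
  obtain ⟨c', hc'⟩ := hv (lift p j)
  have key : ∀ i j : Fin n, j ≠ i → ι j ≠ i → ∀ c c' : ℝ, c • v = lift p i → c' • v = lift p j → |c'| < |c| := by
    intro i j h1 h2 c c' hc hc'
    obtain ⟨x, hx, hx'⟩ := expo_lift hinj hvert hpsym h0 i
    have a1 := hx' j h1
    have a2 := hx' _ h2
    have e : lift p (ι j) = - lift p j := Subtype.ext (hpsym j)
    rw [e, inner_neg_left] at a2
    have hs : ∀ c : ℝ, inner ℝ (c • v) x = c * inner ℝ v x := fun c => real_inner_smul_left (v : EuclideanSpace ℝ (Fin d)) (x : EuclideanSpace ℝ (Fin d)) _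
    rw [← hc, hs] at hx
    rw [← hc', hs] at a1 a2
    have : |c' * inner ℝ v x| < |c * inner ℝ v x| := by
      rw [hx, abs_one, abs_lt]; constructor <;> linarith
    rw [abs_mul, abs_mul] at this
    exact lt_of_mul_lt_mul_right this (abs_nonneg _)
  have k1 := key i j hji (fun h => hji' (by rw [← h, hι])) c c' hc hc'
  have k2 := key j i hji.symm (fun h => hji' h.symm) c' c hc' hc
  linarith
end
end CSV

theorem centrally_symmetric_version {n d e : ℕ}
    (p : Fin n → EuclideanSpace ℝ (Fin d)) (hinj : Function.Injective p)
    (hvert : ∀ i, p i ∈ Set.extremePoints ℝ (convexHull ℝ (Set.range p)))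
    (ι : Fin n → Fin n) (hι : Function.Involutive ι)
    (hpsym : ∀ i, p (ι i) = -p i)
    (q : Fin n → EuclideanSpace ℝ (Fin e))
    (hqsym : ∀ i, q (ι i) = -q i)
    (h1 : ∀ i j, IsEdge p i j → ‖q i - q j‖ ≤ ‖p i - p j‖)
    (h2 : ∀ i, ‖p i‖ ≤ ‖q i‖) :
    (∀ i j, ‖q i - q j‖ = ‖p i - p j‖) ∧ (∀ i, ‖q i‖ = ‖p i‖) := by
  by_cases h0 : ∀ i, p i ≠ 0
  · rcases Nat.lt_or_ge 1 (Module.finrank ℝ (Submodule.span ℝ (Set.range p))) with hd | hd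
    · letI : MeasurableSpace (Submodule.span ℝ (Set.range p)) := borel _
      haveI : BorelSpace (Submodule.span ℝ (Set.range p)) := ⟨rfl⟩
      have hin : ∀ i j, inner ℝ (q i) (q j) = inner ℝ (p i) (p j) := fun i j =>
        CSV.abstract_thm MeasureTheory.Measure.addHaar (CSV.lift p) ι (CSV.good_lift hinj hvert hpsym h0) hd q hqsym
          (fun i j hij hEC => h1 i j (CSV.edge_of_EC hinj hvert hij hEC)) h2 i j
      have hn : ∀ i, ‖q i‖ = ‖p i‖ := fun i => by
        rw [@norm_eq_sqrt_real_inner _ _ _ (q i), @norm_eq_sqrt_real_inner _ _ _ (p i), hin]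
      refine ⟨fun i j => ?_, hn⟩
      rw [← sq_eq_sq₀ (norm_nonneg _) (norm_nonneg _), norm_sub_sq_real, norm_sub_sq_real, hn, hn, hin]
    · have hlow := CSV.low_dim hinj hvert hpsym h0 hι hd
      have hn : ∀ i, ‖q i‖ = ‖p i‖ := by
        intro i
        refine le_antisymm ?_ (h2 i)
        have hii : i ≠ ι i := by
          intro h
          have := hpsym i
          rw [← h] at this
          exact h0 i (CSV.eq_zero_of_eq_neg this)
        have hP : convexHull ℝ (Set.range p) = segment ℝ (p i) (p (ι i)) := by
          rw [← convexHull_pair]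
          congr 1
          ext x
          constructor
          · rintro ⟨j, rfl⟩
            rcases hlow i j with rfl | rfl <;> simp
          · rintro (rfl | rfl) <;> exact ⟨_, rfl⟩
        have := h1 i (ι i) ⟨hii, by rw [hP]⟩
        rw [hpsym, hqsym, sub_neg_eq_add, sub_neg_eq_add, ← two_smul ℝ, ← two_smul ℝ, norm_smul, norm_smul] at this
        simpa using this
      refine ⟨fun i j => ?_, hn⟩
      rcases hlow i j with rfl | rfl
      · simp
      · rw [hpsym, hqsym, sub_neg_eq_add, sub_neg_eq_add, ← two_smul ℝ, ← two_smul ℝ, norm_smul, norm_smul, hn]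
  · push Not at h0
    obtain ⟨i, hi⟩ := h0
    have hp : ∀ j, p j = 0 := by
      intro j
      have h3 := (mem_extremePoints.1 (hvert i)).2 (p j) (subset_convexHull ℝ _ ⟨j, rfl⟩) (p (ι j))
        (subset_convexHull ℝ _ ⟨ι j, rfl⟩) ⟨1/2, 1/2, by norm_num, by norm_num, by norm_num, by
          rw [hpsym, hi]; simp⟩
      rw [h3.1, hi]
    have hq : ∀ j, q j = 0 := by
      intro j
      have h3 : ι j = j := hinj (by rw [hp, hp])
      have := hqsym j
      rw [h3] at this
      exact CSV.eq_zero_of_eq_neg this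
    simp [hp, hq]
end

section
/- Let K ⊆ EuclideanSpace ℝ (Fin d) be a compact convex set, let x ∈ interior K, and let f : EuclideanSpace ℝ (Fin d) → ℝ → EuclideanSpace ℝ (Fin d) be such that the map (y, t) ↦ f y t is continuous on K ×ˢ Set.Icc (0:ℝ) 1, f y 0 = y for all y ∈ K, and f y t ≠ x for all y ∈ frontier K and all t ∈ Set.Icc (0:ℝ) 1. Then x ∈ interior ((fun y => f y 1) '' K). -/
open MeasureTheory Set Filter Topology Polynomial in
theorem aux_extrapolate (δ : ℝ) (hδ : 0 < δ) (N : ℕ) :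
    ∃ (s : Finset ℕ) (v w : ℕ → ℝ), (∀ i ∈ s, v i ∈ Ioc 0 δ) ∧ ∑ i ∈ s, w i = 1 ∧
      ∀ P : ℝ[X], P.natDegree ≤ N → P.eval 1 = ∑ i ∈ s, w i * P.eval (v i) := by
  let s := Finset.range (N + 1)
  let v : ℕ → ℝ := fun i => δ / (i + 1)
  have hinj : Set.InjOn v s := by
    intro i _ j _ h
    simp only [v] at h
    have h1 : (0 : ℝ) < i + 1 := by positivity
    have h2 : (0 : ℝ) < j + 1 := by positivity
    rw [div_eq_div_iff h1.ne' h2.ne'] at h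
    have := mul_left_cancel₀ hδ.ne' h
    have h3 : (i : ℝ) = j := by linarith
    exact_mod_cast h3
  have key : ∀ P : ℝ[X], P.natDegree ≤ N →
      P.eval 1 = ∑ i ∈ s, (Lagrange.basis s v i).eval 1 * P.eval (v i) := by
    intro P hP
    have hd : P.degree < s.card := by
      simp only [s, Finset.card_range]
      exact lt_of_le_of_lt (degree_le_of_natDegree_le hP) (by exact_mod_cast Nat.lt_succ_self N)
    conv_lhs => rw [Lagrange.eq_interpolate hinj hd, Lagrange.interpolate_apply]
    simp [eval_finsetSum, mul_comm]
  refine ⟨s, v, fun i => (Lagrange.basis s v i).eval 1, ?_, ?_, key⟩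
  · intro i _
    have h1 : (1 : ℝ) ≤ i + 1 := by simp
    exact ⟨by positivity, div_le_self hδ.le h1⟩
  · have := key 1 (by simp)
    simpa using this.symm

open Polynomial in
theorem aux_detpoly {d : ℕ} (A : EuclideanSpace ℝ (Fin d) →L[ℝ] EuclideanSpace ℝ (Fin d)) :
    ∃ P : ℝ[X], P.natDegree ≤ d ∧
      ∀ t : ℝ, P.eval t = (ContinuousLinearMap.id ℝ _ + t • A).det := by
  let b := (EuclideanSpace.basisFun (Fin d) ℝ).toBasis
  let M := LinearMap.toMatrix b b (A : EuclideanSpace ℝ (Fin d) →ₗ[ℝ] EuclideanSpace ℝ (Fin d))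
  refine ⟨Matrix.det ((X : ℝ[X]) • M.map C + (1 : Matrix (Fin d) (Fin d) ℝ).map C), ?_, ?_⟩
  · simpa using natDegree_det_X_add_C_le M 1
  · intro t
    rw [← coe_evalRingHom, RingHom.map_det]
    rw [ContinuousLinearMap.det, ← LinearMap.det_toMatrix b]
    congr 1
    ext i j
    simp only [ContinuousLinearMap.toLinearMap_add, ContinuousLinearMap.toLinearMap_smul,
      ContinuousLinearMap.coe_id, map_add, map_smul, LinearMap.toMatrix_id]
    by_cases hij : i = j
    · simp [M, hij]
      ring
    · simp [M, hij]
      ring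

open Polynomial in
theorem aux_quadpoly {d : ℕ} (a u : EuclideanSpace ℝ (Fin d)) (m : ℝ) (n : ℕ) :
    ∃ P : ℝ[X], P.natDegree ≤ 2 * n ∧
      ∀ t : ℝ, P.eval t = (1 - ‖a + t • u‖ ^ 2 / m) ^ n := by
  refine ⟨(C (1 - ‖a‖ ^ 2 / m) + C (- (2 * inner ℝ a u / m)) * X
    + C (- (‖u‖ ^ 2 / m)) * X ^ 2) ^ n, ?_, ?_⟩
  · rw [mul_comm 2 n]
    apply natDegree_pow_le_of_le n
    compute_degree
  · intro t
    rw [norm_add_sq_real, inner_smul_right, norm_smul, mul_pow]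
    simp
    ring

open MeasureTheory Set Filter Topology in
theorem aux_det_pos {d : ℕ} (A : EuclideanSpace ℝ (Fin d) →L[ℝ] EuclideanSpace ℝ (Fin d))
    (hA : ‖A‖ < 1) : 0 < (ContinuousLinearMap.id ℝ _ + A).det := by
  have hne : ∀ t ∈ Icc (0 : ℝ) 1, (ContinuousLinearMap.id ℝ _ + t • A).det ≠ 0 := by
    intro t ht h0
    have hlt : ‖-(t • A)‖ < 1 := by
      rw [norm_neg, norm_smul, Real.norm_of_nonneg ht.1]
      nlinarith [ht.2, norm_nonneg A]
    have hu : IsUnit (1 - -(t • A)) := isUnit_one_sub_of_norm_lt_one hlt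
    rw [sub_neg_eq_add] at hu
    have : IsUnit (LinearMap.det ((1 + t • A :
      EuclideanSpace ℝ (Fin d) →L[ℝ] EuclideanSpace ℝ (Fin d)) : EuclideanSpace ℝ (Fin d) →ₗ[ℝ] EuclideanSpace ℝ (Fin d))) := by
      apply IsUnit.map LinearMap.det
      exact hu.map (ContinuousLinearMap.toLinearMapRingHom)
    exact this.ne_zero h0
  by_contra hneg
  push Not at hneg
  have hc : ContinuousOn (fun t : ℝ => (ContinuousLinearMap.id ℝ _ + t • A).det) (Icc 0 1) :=
    (ContinuousLinearMap.continuous_det.comp (by fun_prop)).continuousOn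
  have := intermediate_value_Icc' (zero_le_one) hc
  have h0 : (0 : ℝ) ∈ Icc ((ContinuousLinearMap.id ℝ _ + (1 : ℝ) • A).det)
      ((ContinuousLinearMap.id ℝ _ + (0 : ℝ) • A).det) := by
    refine ⟨by simpa using hneg, ?_⟩
    simp [ContinuousLinearMap.det]
  obtain ⟨t, ht, h⟩ := this h0
  exact hne t ht h

open MeasureTheory Set Filter Topology in
theorem aux_cov {d : ℕ} {K : Set (EuclideanSpace ℝ (Fin d))} (hK : IsCompact K)
    {φ : EuclideanSpace ℝ (Fin d) → EuclideanSpace ℝ (Fin d)} (hφ : ContDiff ℝ 1 φ)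
    (h0 : ∀ y, y ∉ K → φ y = 0) :
    ∃ δ > (0 : ℝ), ∀ t ∈ Ioc 0 δ, ∀ g : EuclideanSpace ℝ (Fin d) → ℝ,
      ∫ y in K, g (y + t • φ y) * (ContinuousLinearMap.id ℝ _ + t • fderiv ℝ φ y).det
        = ∫ y in K, g y := by
  obtain ⟨L, hL⟩ := hφ.lipschitzWith_of_hasCompactSupport
    (HasCompactSupport.intro hK h0) one_ne_zero
  refine ⟨1 / (L + 1) / 2, by positivity, ?_⟩
  intro t ht g
  have htL : t * L < 1 := by
    have h1 : t ≤ 1 / (L + 1) / 2 := ht.2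
    have h2 : (0 : ℝ) ≤ L := L.2
    rw [div_div, le_div_iff₀ (by positivity)] at h1
    nlinarith [ht.1]
  let G : EuclideanSpace ℝ (Fin d) → EuclideanSpace ℝ (Fin d) := fun y => y + t • φ y
  have hdist : ∀ a b, ‖t • φ a - t • φ b‖ ≤ (t * L) * ‖a - b‖ := by
    intro a b
    rw [← smul_sub, norm_smul, Real.norm_of_nonneg ht.1.le, mul_assoc]
    exact mul_le_mul_of_nonneg_left (hL.norm_sub_le a b) ht.1.le
  have hinj : Function.Injective G := by
    intro a b hab
    have h1 : a - b = -(t • φ a - t • φ b) := by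
      have : a + t • φ a = b + t • φ b := hab
      rw [neg_sub, sub_eq_sub_iff_add_eq_add, this, add_comm]
    have h2 := hdist a b
    rw [← norm_neg, ← h1] at h2
    have h3 : ‖a - b‖ = 0 := by nlinarith [norm_nonneg (a - b)]
    exact sub_eq_zero.1 (norm_eq_zero.1 h3)
  have hsurj : Function.Surjective G := by
    intro z
    have hc : ContractingWith (⟨t, ht.1.le⟩ * L) (fun y => z - t • φ y) := by
      refine ⟨by exact_mod_cast htL, LipschitzWith.of_dist_le_mul ?_⟩
      intro a b
      rw [dist_eq_norm, dist_eq_norm, sub_sub_sub_cancel_left, ← norm_neg, neg_sub]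
      exact hdist a b
    refine ⟨hc.fixedPoint _, ?_⟩
    have := hc.fixedPoint_isFixedPt
    have h : z - t • φ (hc.fixedPoint _) = hc.fixedPoint _ := this
    exact (sub_eq_iff_eq_add.1 h).symm
  have himg : G '' K = K := by
    have hout : ∀ y, y ∉ K → G y = y := fun y hy => by simp [G, h0 y hy]
    ext z
    constructor
    · rintro ⟨y, hy, rfl⟩
      by_contra hz
      have := hinj (hout _ hz)
      rw [this] at hz
      exact hz hy
    · intro hz
      obtain ⟨y, rfl⟩ := hsurj z
      by_cases hy : y ∈ K
      · exact ⟨y, hy, rfl⟩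
      · rw [hout y hy] at hz
        exact absurd hz hy
  have hder : ∀ y, HasFDerivAt G (ContinuousLinearMap.id ℝ _ + t • fderiv ℝ φ y) y := by
    intro y
    exact (hasFDerivAt_id y).add
      (((hφ.differentiable one_ne_zero) y).hasFDerivAt.const_smul t)
  have := integral_image_eq_integral_abs_det_fderiv_smul volume hK.measurableSet
    (fun y _ => (hder y).hasFDerivWithinAt) hinj.injOn g
  rw [himg] at this
  rw [this]
  refine integral_congr_ae (Eventually.of_forall fun y => ?_)
  have hpos : 0 < (ContinuousLinearMap.id ℝ _ + t • fderiv ℝ φ y).det := by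
    apply aux_det_pos
    rw [norm_smul, Real.norm_of_nonneg ht.1.le]
    exact (mul_le_mul_of_nonneg_left (norm_fderiv_le_of_lipschitz ℝ hL) ht.1.le).trans_lt htL
  simp only [smul_eq_mul, abs_of_pos hpos, G]
  ring

open MeasureTheory Set Filter Topology in
theorem aux_invariance {d : ℕ} {K : Set (EuclideanSpace ℝ (Fin d))} (hK : IsCompact K)
    {φ : EuclideanSpace ℝ (Fin d) → EuclideanSpace ℝ (Fin d)} (hφ : ContDiff ℝ 1 φ)
    (h0 : ∀ y, y ∉ K → φ y = 0) (z : EuclideanSpace ℝ (Fin d)) (m : ℝ) (n : ℕ) :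
    ∫ y in K, (1 - ‖y + φ y - z‖ ^ 2 / m) ^ n *
        (ContinuousLinearMap.id ℝ _ + fderiv ℝ φ y).det
        = ∫ y in K, (1 - ‖y - z‖ ^ 2 / m) ^ n := by
  obtain ⟨δ, hδ, H⟩ := aux_cov hK hφ h0
  obtain ⟨s, v, w, hv, hw, hP⟩ := aux_extrapolate δ hδ (2 * n + d)
  let F : ℝ → EuclideanSpace ℝ (Fin d) → ℝ := fun t y => (1 - ‖y + t • φ y - z‖ ^ 2 / m) ^ n *
        (ContinuousLinearMap.id ℝ _ + t • fderiv ℝ φ y).det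
  have hFc : ∀ t, Continuous (F t) := by
    intro t
    have h1 : Continuous φ := hφ.continuous
    have h2 : Continuous (fderiv ℝ φ) := hφ.continuous_fderiv one_ne_zero
    have h3 : Continuous fun y => (ContinuousLinearMap.id ℝ _ + t • fderiv ℝ φ y).det :=
      ContinuousLinearMap.continuous_det.comp (by fun_prop)
    refine Continuous.mul ?_ h3
    fun_prop
  have hF1 : ∀ y, F 1 y = ∑ i ∈ s, w i * F (v i) y := by
    intro y
    obtain ⟨P, hPd, hPe⟩ := aux_detpoly (fderiv ℝ φ y)
    obtain ⟨Q, hQd, hQe⟩ := aux_quadpoly (y - z) (φ y) m n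
    have := hP (Q * P) (Polynomial.natDegree_mul_le_of_le hQd hPd)
    have e : ∀ t, (Q * P).eval t = F t y := by
      intro t
      rw [Polynomial.eval_mul, hPe, hQe, sub_add_eq_add_sub]
    simpa only [e] using this
  have hi : ∀ i ∈ s, ∫ y in K, F (v i) y = ∫ y in K, (1 - ‖y - z‖ ^ 2 / m) ^ n :=
    fun i his => H (v i) (hv i his) (fun y => (1 - ‖y - z‖ ^ 2 / m) ^ n)
  calc _ = ∫ y in K, F 1 y := by simp [F]
    _ = ∫ y in K, ∑ i ∈ s, w i * F (v i) y := by simp_rw [hF1]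
    _ = ∑ i ∈ s, w i * ∫ y in K, F (v i) y := by
      rw [integral_finsetSum]
      · simp_rw [integral_const_mul]
      · intro i _
        exact (((hFc (v i)).const_mul (w i)).continuousOn).integrableOn_compact hK
    _ = ∑ i ∈ s, w i * ∫ y in K, (1 - ‖y - z‖ ^ 2 / m) ^ n :=
      Finset.sum_congr rfl fun i his => by rw [hi i his]
    _ = _ := by rw [← Finset.sum_mul, hw, one_mul]

open MeasureTheory Set Filter Topology in
theorem aux_smooth {d : ℕ} {K : Set (EuclideanSpace ℝ (Fin d))} (hK : IsCompact K)
    {φ : EuclideanSpace ℝ (Fin d) → EuclideanSpace ℝ (Fin d)} (hφ : ContDiff ℝ 1 φ)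
    (h0 : ∀ y, y ∉ K → φ y = 0) {z : EuclideanSpace ℝ (Fin d)} (hz : z ∈ interior K)
    (hne : ∀ y, y + φ y ≠ z) : False := by
  have h1 : Continuous φ := hφ.continuous
  have h2 : Continuous (fderiv ℝ φ) := hφ.continuous_fderiv one_ne_zero
  have hKne : K.Nonempty := ⟨z, interior_subset hz⟩
  have hcG : Continuous fun y => ‖y + φ y - z‖ := by fun_prop
  have hcI : Continuous fun y : EuclideanSpace ℝ (Fin d) => ‖y - z‖ := by fun_prop
  have hcD : Continuous fun y => (ContinuousLinearMap.id ℝ _ + fderiv ℝ φ y).det :=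
      ContinuousLinearMap.continuous_det.comp (by fun_prop)
  obtain ⟨M1, hM1⟩ := hK.exists_bound_of_continuousOn hcG.continuousOn
  obtain ⟨M2, hM2⟩ := hK.exists_bound_of_continuousOn hcI.continuousOn
  obtain ⟨D, hD⟩ := hK.exists_bound_of_continuousOn hcD.continuousOn
  obtain ⟨y0, hy0, hmin⟩ := hK.exists_isMinOn hKne hcG.continuousOn
  set ε := ‖y0 + φ y0 - z‖ with hε
  have hεpos : 0 < ε := norm_pos_iff.2 (sub_ne_zero.2 (hne y0))
  obtain ⟨M, hMpos, hMG, hMI⟩ : ∃ M : ℝ, 0 < M ∧ (∀ y ∈ K, ‖y + φ y - z‖ ≤ M) ∧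
      (∀ y ∈ K, ‖y - z‖ ≤ M) := by
    refine ⟨max 1 (max M1 M2), by positivity, fun y hy => ?_, fun y hy => ?_⟩
    · exact ((le_abs_self _).trans (hM1 y hy)).trans (by simp)
    · exact ((le_abs_self _).trans (hM2 y hy)).trans (by simp)
  have hεM : ε ≤ M := hMG y0 hy0
  obtain ⟨r, hr, hball⟩ := Metric.mem_nhds_iff.1 (mem_interior_iff_mem_nhds.1 hz)
  set ρ := min r (ε / 2) with hρ
  have hρpos : 0 < ρ := by positivity
  set B := Metric.ball z ρ with hB
  have hBK : B ⊆ K := (Metric.ball_subset_ball (min_le_left _ _)).trans hball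
  set q := 1 - ε ^ 2 / M ^ 2 with hq
  set q' := 1 - (ε / 2) ^ 2 / M ^ 2 with hq'
  have hq0 : 0 ≤ q := by
    rw [hq, sub_nonneg, div_le_one (by positivity)]
    gcongr
  have hqq : q < q' := by
    rw [hq, hq']
    gcongr
    linarith
  have hq'0 : 0 < q' := hq0.trans_lt hqq
  have hvK : volume K < ⊤ := hK.measure_lt_top
  have key : ∀ n : ℕ, q' ^ n * volume.real B ≤ (q ^ n * D) * volume.real K := by
    intro n
    have hinv := aux_invariance hK hφ h0 z (M ^ 2) n
    have hup : ‖∫ y in K, (1 - ‖y + φ y - z‖ ^ 2 / M ^ 2) ^ n *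
        (ContinuousLinearMap.id ℝ _ + fderiv ℝ φ y).det‖ ≤ (q ^ n * D) * volume.real K := by
      apply norm_setIntegral_le_of_norm_le_const hvK
      intro y hy
      have ha : 0 ≤ 1 - ‖y + φ y - z‖ ^ 2 / M ^ 2 := by
        rw [sub_nonneg, div_le_one (by positivity)]
        have := hMG y hy
        gcongr
      have hb : 1 - ‖y + φ y - z‖ ^ 2 / M ^ 2 ≤ q := by
        have : ε ≤ ‖y + φ y - z‖ := hmin hy
        rw [hq]
        gcongr
      rw [norm_mul, norm_pow, Real.norm_of_nonneg ha]
      exact mul_le_mul (pow_le_pow_left₀ ha hb n) (hD y hy) (norm_nonneg _) (by positivity)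
    have hcont : Continuous fun y : EuclideanSpace ℝ (Fin d) => (1 - ‖y - z‖ ^ 2 / M ^ 2) ^ n := by
      fun_prop
    have hint := hcont.continuousOn.integrableOn_compact (μ := volume) hK
    have hlow : q' ^ n * volume.real B ≤ ∫ y in K, (1 - ‖y - z‖ ^ 2 / M ^ 2) ^ n := by
      calc q' ^ n * volume.real B = ∫ y in B, q' ^ n := by
            rw [setIntegral_const, smul_eq_mul, mul_comm]
        _ ≤ ∫ y in B, (1 - ‖y - z‖ ^ 2 / M ^ 2) ^ n := by
            refine setIntegral_mono_on ?_ (hint.mono_set hBK) measurableSet_ball ?_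
            · exact integrableOn_const (measure_ball_lt_top.ne)
            · intro y hy
              have : ‖y - z‖ ≤ ε / 2 := by
                rw [← dist_eq_norm]
                exact (Metric.mem_ball.1 hy).le.trans (min_le_right _ _)
              rw [hq']
              gcongr
        _ ≤ _ := by
            refine setIntegral_mono_set hint ?_ (LE.le.eventuallyLE hBK)
            refine (ae_restrict_iff' hK.measurableSet).2 (Eventually.of_forall fun y hy => ?_)
            have ha : 0 ≤ 1 - ‖y - z‖ ^ 2 / M ^ 2 := by
              rw [sub_nonneg, div_le_one (by positivity)]
              have := hMI y hy
              gcongr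
            exact pow_nonneg ha n
    rw [← hinv] at hlow
    exact hlow.trans ((le_abs_self _).trans hup)
  have hBpos : 0 < volume.real B := by
    rw [measureReal_def]
    exact ENNReal.toReal_pos (Metric.measure_ball_pos _ _ hρpos).ne' measure_ball_lt_top.ne
  have hlim : Tendsto (fun n : ℕ => (q / q') ^ n * (D * volume.real K)) atTop (𝓝 0) := by
    have := (tendsto_pow_atTop_nhds_zero_of_lt_one (div_nonneg hq0 hq'0.le)
      ((div_lt_one hq'0).2 hqq)).mul_const (D * volume.real K)
    simpa using this
  have hge : ∀ n : ℕ, volume.real B ≤ (q / q') ^ n * (D * volume.real K) := by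
    intro n
    have := key n
    rw [div_pow, div_mul_eq_mul_div, le_div_iff₀ (by positivity)]
    linarith
  have := ge_of_tendsto' hlim hge
  linarith

open MeasureTheory Set Filter Topology in
theorem aux_cont {d : ℕ} {K : Set (EuclideanSpace ℝ (Fin d))} (hK : IsCompact K)
    {G : EuclideanSpace ℝ (Fin d) → EuclideanSpace ℝ (Fin d)} (hG : Continuous G)
    (h0 : ∀ y, y ∉ K → G y = y) {z : EuclideanSpace ℝ (Fin d)} (hz : z ∈ interior K) :
    ∃ y ∈ K, G y = z := by
  by_contra hcon
  push Not at hcon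
  have hne : ∀ y, G y ≠ z := by
    intro y
    by_cases hy : y ∈ K
    · exact hcon y hy
    · rw [h0 y hy]
      rintro rfl
      exact hy (interior_subset hz)
  have hc : Continuous fun y => G y - y := by fun_prop
  obtain ⟨ψ, hψ, hclose, hsupp⟩ := hc.exists_contDiff_approx 1
    (ε := fun y => dist (G y) z) (by fun_prop) (fun y => dist_pos.2 (hne y))
  refine aux_smooth hK (φ := ψ) (by exact_mod_cast hψ) ?_ hz ?_
  · intro y hy
    by_contra hn
    exact hsupp hn (by simp [h0 y hy])
  · intro y hy
    have := hclose y
    rw [dist_eq_norm, dist_eq_norm] at this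
    have e : ψ y - (G y - y) = z - G y := by rw [← hy]; abel
    rw [e, norm_sub_rev] at this
    exact lt_irrefl _ this

open MeasureTheory Set Filter Topology in
theorem homotopy_interior {d : ℕ}
    (K : Set (EuclideanSpace ℝ (Fin d)))
    (hKcomp : IsCompact K) (hKconv : Convex ℝ K)
    (x : EuclideanSpace ℝ (Fin d)) (hx : x ∈ interior K)
    (f : EuclideanSpace ℝ (Fin d) → ℝ → EuclideanSpace ℝ (Fin d))
    (hcont : ContinuousOn (fun yt : EuclideanSpace ℝ (Fin d) × ℝ => f yt.1 yt.2)
      (K ×ˢ Set.Icc (0 : ℝ) 1))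
    (hid : ∀ y ∈ K, f y 0 = y)
    (hbd : ∀ y ∈ frontier K, ∀ t ∈ Set.Icc (0 : ℝ) 1, f y t ≠ x) :
    x ∈ interior ((fun y => f y 1) '' K) := by
  classical
  have hfK : frontier K ⊆ K := hKcomp.isClosed.frontier_subset
  have hfc : IsCompact (frontier K) := hKcomp.of_isClosed_subset isClosed_frontier hfK
  have hSc : IsCompact ((fun yt : EuclideanSpace ℝ (Fin d) × ℝ => f yt.1 yt.2) ''
      (frontier K ×ˢ Set.Icc (0 : ℝ) 1)) :=
    (hfc.prod isCompact_Icc).image_of_continuousOn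
      (hcont.mono (prod_mono hfK Subset.rfl))
  have hxS : x ∈ ((fun yt : EuclideanSpace ℝ (Fin d) × ℝ => f yt.1 yt.2) ''
      (frontier K ×ˢ Set.Icc (0 : ℝ) 1))ᶜ := by
    rintro ⟨⟨y, t⟩, ⟨hy, ht⟩, h⟩
    exact hbd y hy t ht h
  rw [mem_interior_iff_mem_nhds]
  filter_upwards [hSc.isClosed.isOpen_compl.mem_nhds hxS, isOpen_interior.mem_nhds hx]
    with z hzS hzK
  have hzS' : ∀ y ∈ frontier K, ∀ t ∈ Icc (0 : ℝ) 1, f y t ≠ z := fun y hy t ht h =>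
    hzS ⟨(y, t), ⟨hy, ht⟩, h⟩
  -- the set of points whose track hits z
  let T : Set (EuclideanSpace ℝ (Fin d) × ℝ) := (K ×ˢ Icc (0 : ℝ) 1) ∩
    (fun yt : EuclideanSpace ℝ (Fin d) × ℝ => f yt.1 yt.2) ⁻¹' {z}
  have hprod : IsCompact (K ×ˢ Icc (0 : ℝ) 1) := hKcomp.prod isCompact_Icc
  have hT : IsCompact T := hprod.of_isClosed_subset
    (hcont.preimage_isClosed_of_isClosed hprod.isClosed isClosed_singleton) inter_subset_left
  have hB : IsClosed (Prod.fst '' T) := (hT.image continuous_fst).isClosed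
  have hdisj : Disjoint (frontier K) (Prod.fst '' T) := by
    rw [Set.disjoint_left]
    rintro y hy ⟨⟨y', t⟩, ⟨⟨-, ht⟩, h⟩, rfl⟩
    exact hzS' _ hy t ht h
  obtain ⟨s, hs0, hs1, hsI⟩ := exists_continuous_zero_one_of_isClosed isClosed_frontier hB hdisj
  have hGc : Continuous (K.piecewise (fun y => f y (s y)) id) := by
    apply continuous_piecewise
    · intro y hy
      have : s y = 0 := hs0 hy
      simp [this, hid y (hfK hy)]
    · rw [hKcomp.isClosed.closure_eq]
      exact hcont.comp (f := fun y => (y, s y)) (by fun_prop) (fun y hy => ⟨hy, hsI y⟩)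
    · exact continuousOn_id
  obtain ⟨y, hy, hyz⟩ := aux_cont hKcomp hGc (fun y hy => by simp [hy]) hzK
  rw [piecewise_eq_of_mem _ _ _ hy] at hyz
  have : s y = 1 := hs1 ⟨(y, s y), ⟨⟨hy, hsI y⟩, hyz⟩, rfl⟩
  exact ⟨y, hy, by simpa [this] using hyz⟩
end
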